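/- arXiv:2302.11943 — 8 statements merged into one kernel-verified Lean document; each statement's English description precedes it below -/
import Mathlib

section
/- Let Γ = (G, (ρ_0, …, ρ_{r−1})) be an even transitive string C-group of degree 11 of rank r ∈ {3,4,5} admitting a fracture graph. If i is the label of a split (Γ has an i-split), then G_i has a trivial orbit: one of the orbits of G_i on the 11 points is a singleton. -/
/-!
Let `{a, b}` be the split, with label `i`. Every `i`-edge other than `{a, b}` stays inside a
`G_i`-orbit, so by transitivity `G_i` has exactly two orbits, those of `a` and `b`, and one of them
has at most five points. A generator `ρ_j` with `|j - i| > 1` commutes with `ρ_i`, hence permutes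
the splits of label `i`, hence fixes both `a` and `b`. After possibly exchanging `a` and `b` and
reversing the order of the generators, `a` has an orbit of at most five points and `2 i < r`; this
leaves seven pairs `(r, i)`.

Each pair is settled by a finite search (`SplitSearch.search`), evaluated by the kernel; to make this
fast, tables are packed into natural numbers and all operations reduce to those of `Nat.add`,
`Nat.beq`, `Nat.land` and the like that the kernel computes in one step. The search explores
the permutation graph from `a`, naming points in the order in which they are met, and fills in a
partial table of the `ρ_j` on named points. First the rows `j ≠ i` are filled on the orbit of `a`,
then, starting from `b = ρ_i a`, on the orbit of `b`, and finally row `i` is completed. A branch is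
cut when a square `ρ_j ρ_k = ρ_k ρ_j` with `|j - k| > 1` fails to close. The complete tables that
remain and have no trivial `G_i`-orbit at `a` are excluded for one of three reasons: some `ρ_j` is
odd (it has 1, 5 or 9 fixed points); some `G_j` is transitive, which contradicts the existence of a
fracture graph; or the intersection property fails. For the last one, `SplitSearch.certs` lists
certificates: two words `w₁`, `w₂` in the generators which define the same permutation `g`, and a
pair of points that `g` moves out of its orbit under the letters common to `w₁` and `w₂`. The
intersection property would place `g` in the group generated by these letters.

The search is correct because a counterexample (`SplitSearch.SplitData`) always follows one of its
branches: `SplitSearch.State` is the invariant relating the arguments of the search to the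
configuration, and `SplitSearch.search_false` shows that in its presence the search cannot report
success.
-/

open Equiv

/-- An involution: an element of order 2. -/
def IsInvolution {G : Type*} [Group G] (g : G) : Prop := g ≠ 1 ∧ g * g = 1

/-- The string (commuting) property: `(ρ i * ρ j)^2 = 1` whenever `|i - j| > 1`. -/
def StringCommuting {G : Type*} [Group G] {r : ℕ} (ρ : Fin r → G) : Prop :=
  ∀ i j : Fin r, ((i : ℕ) + 1 < j ∨ (j : ℕ) + 1 < i) → (ρ i * ρ j) * (ρ i * ρ j) = 1

/-- A string group generated by involutions (sggi). -/
def Sggi {G : Type*} [Group G] {r : ℕ} (ρ : Fin r → G) : Prop :=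
  (∀ i, IsInvolution (ρ i)) ∧ StringCommuting ρ

/-- The intersection property of string C-groups. -/
def IntersectionProperty {G : Type*} [Group G] {r : ℕ} (ρ : Fin r → G) : Prop :=
  ∀ J K : Set (Fin r),
    Subgroup.closure (ρ '' J) ⊓ Subgroup.closure (ρ '' K) =
      Subgroup.closure (ρ '' (J ∩ K))

/-- `a` and `b` are in the same orbit of the subgroup `H` of `Perm Ω`. -/
def SameOrbit {Ω : Type*} (H : Subgroup (Perm Ω)) (a b : Ω) : Prop :=
  ∃ g ∈ H, g a = b

/-- The maximal parabolic subgroup `G_i = ⟨ρ_j : j ≠ i⟩`. -/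
def Gi {r : ℕ} {Ω : Type*} (ρ : Fin r → Perm Ω) (i : Fin r) : Subgroup (Perm Ω) :=
  Subgroup.closure (ρ '' {j | j ≠ i})

/-- A subgroup of `Perm Ω` is transitive. -/
def IsTransitiveSubgroup {Ω : Type*} (H : Subgroup (Perm Ω)) : Prop :=
  ∀ x y : Ω, ∃ g ∈ H, g x = y


/-- The sggi admits a fracture graph: for every `i` there is an `i`-edge whose
endpoints lie in different `G_i`-orbits. -/
def HasFractureGraph {r : ℕ} {Ω : Type*} (ρ : Fin r → Perm Ω) : Prop :=
  ∀ i, ∃ a, ρ i a ≠ a ∧ ¬ SameOrbit (Gi ρ i) a (ρ i a)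

/-- `{a, b}` is an `i`-split: an `i`-edge whose endpoints lie in different
`G_i`-orbits and which is the unique `i`-edge with this property. -/
def IsSplit {r : ℕ} {Ω : Type*} (ρ : Fin r → Perm Ω) (i : Fin r) (a b : Ω) : Prop :=
  ρ i a = b ∧ a ≠ b ∧ ¬ SameOrbit (Gi ρ i) a b ∧
    ∀ c : Ω, ρ i c ≠ c → ¬ SameOrbit (Gi ρ i) c (ρ i c) → (c = a ∨ c = b)

/-! ### The search procedure -/


namespace SplitSearch

/-- Labels `j`, `k` are far apart when `|j - k| > 1`; the corresponding generators commute. -/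
def far (j k : ℕ) : Bool := Nat.ble (j + 2) k || Nat.ble (k + 2) j

/-- The entry for label `j` and vertex `v` in the packed table `T`, read off four bits:
`0` means unknown, and `w + 1` means that `ρ_j` maps `v` to `w`. -/
def get (T j v : ℕ) : ℕ := Nat.land (Nat.shiftRight T (Nat.add (Nat.mul 64 j) (Nat.mul 4 v))) 15

/-- Write `x` into an empty entry of the table. -/
def put (T j v x : ℕ) : ℕ := Nat.lor T (Nat.shiftLeft x (Nat.add (Nat.mul 64 j) (Nat.mul 4 v)))

/-- Record the `j`-edge `{v, w}` (a fixed point if `v = w`). -/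
def setE (T j v w : ℕ) : ℕ := put (put T j v (Nat.succ w)) j w (Nat.succ v)

/-- `f` holds at every natural number below the bound. -/
def allW : ℕ → (ℕ → Bool) → Bool
  | 0, _ => true
  | k + 1, f => f k && allW k f

/-- The number of naturals below the bound at which `f` holds. -/
def countW : ℕ → (ℕ → Bool) → ℕ
  | 0, _ => 0
  | k + 1, f => Nat.add (cond (f k) 1 0) (countW k f)

/-- No contradiction to `ρ_j ρ_k = ρ_k ρ_j` is visible at the vertex `v`. -/
def sq (T j k v : ℕ) : Bool :=
  (fun y => Nat.beq y 0 || (fun z => Nat.beq z 0 || (fun w => Nat.beq w 0 ||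
    (fun x => cond (Nat.beq x 0)
      ((fun u => Nat.beq u 0 || Nat.beq u w) (get T k (Nat.pred z))) (Nat.beq x z))
      (get T k (Nat.pred w))) (get T j v)) (get T j (Nat.pred y))) (get T k v)

/-- After the `j`-edge `{v, w}` has been recorded, all commutation relations involving `j`
are still consistent around it. -/
def okAt (r T j v w : ℕ) : Bool :=
  allW r fun k => !far j k || (sq T j k v && sq T j k w)

/-- `w` is not already known to be the image under `ρ_j` of a vertex other than `v`. -/
def cand (T j v w : ℕ) : Bool :=
  (fun g => Nat.beq g 0 || Nat.beq g (Nat.succ v)) (get T j w)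

/-- Record the `j`-edge `{v, w}` and, unless this is inconsistent, continue with the new table. -/
def tryE (r T j v w : ℕ) (cont : ℕ → Bool) : Bool :=
  (fun T' => !okAt r T' j v w || cont T') (setE T j v w)

/-- The involution recorded under label `j` is odd: it has 1, 5 or 9 fixed points. -/
def oddL (T j : ℕ) : Bool :=
  Nat.beq (Nat.mod (countW 11 fun v => Nat.beq (get T j v) (Nat.succ v)) 4) 1

/-- Bit `u` of the mask `m`. -/
def bit (m u : ℕ) : Bool := Nat.beq (Nat.land (Nat.shiftRight m u) 1) 1

/-- Add the point `u` to the mask `m`. -/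
def ins (m u : ℕ) : ℕ := Nat.lor m (Nat.shiftLeft 1 u)

/-- Close the vertex set `m` once under the labels `k < K`, `k ≠ j`, applied to `u`. -/
def growV (T j u : ℕ) : ℕ → ℕ → ℕ
  | 0, m => m
  | k + 1, m => growV T j u k (cond (Nat.beq k j) m (ins m (Nat.pred (get T k u))))

/-- One pass of `growV` over the vertices of `m` below the bound. -/
def growP (r T j : ℕ) : ℕ → ℕ → ℕ
  | 0, m => m
  | u + 1, m => (fun m' => cond (bit m' u) (growV T j u r m') m') (growP r T j u m)

/-- Repeated passes of `growP`. -/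
def grow (r T j : ℕ) : ℕ → ℕ → ℕ
  | 0, m => m
  | n + 1, m => grow r T j n (growP r T j 11 m)

/-- The labels other than `j` already act transitively. -/
def transW (r T j : ℕ) : Bool := (fun m => allW 11 (bit m)) (grow r T j 6 1)

/-- The image of the vertex `v` under a word in the labels (rightmost letter first). -/
def ev (T : ℕ) : List ℕ → ℕ → ℕ
  | [], v => v
  | j :: l, v => Nat.pred (get T j (ev T l v))

/-- A certificate that the intersection property fails: two words `w₁`, `w₂` that represent the
same permutation, the letters `d`, `e` common to both, and a pair `(x, y)` of points which that
permutation maps outside its orbit under `⟨ρ_d, ρ_e⟩`. -/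
structure Cert where
  /-- the first word -/
  w₁ : List ℕ
  /-- the second word -/
  w₂ : List ℕ
  /-- a common letter -/
  d : ℕ
  /-- a common letter -/
  e : ℕ
  /-- first coordinate of the pair -/
  x : ℕ
  /-- second coordinate of the pair -/
  y : ℕ

/-- The set (mask) of pairs `(x, y)`, coded as `11 x + y`, met when applying `d` and `e`
alternately. -/
def walk (T : ℕ) : ℕ → ℕ → ℕ → ℕ → ℕ → ℕ → ℕ
  | 0, _, _, _, _, M => M
  | n + 1, d, e, x, y, M =>
    walk T n e d (Nat.pred (get T d x)) (Nat.pred (get T d y)) (ins M (Nat.add (Nat.mul 11 x) y))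

/-- The set `M` of pairs is closed under the label `k`. -/
def closedW (T M k : ℕ) : Bool :=
  allW 11 fun x => allW 11 fun y => !bit M (Nat.add (Nat.mul 11 x) y) ||
    bit M (Nat.add (Nat.mul 11 (Nat.pred (get T k x))) (Nat.pred (get T k y)))

/-- Membership of a label in a word. -/
def memW (k : ℕ) : List ℕ → Bool
  | [] => false
  | j :: l => Nat.beq k j || memW k l

/-- The certificate `c` refutes the intersection property for the table `T`. -/
def certOK (r T : ℕ) (c : Cert) : Bool :=
  allW 11 (fun v => Nat.beq (ev T c.w₁ v) (ev T c.w₂ v)) &&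
  (c.w₁.all (fun k => Nat.blt k r) && (c.w₂.all (fun k => Nat.blt k r) &&
  (Nat.blt c.x 11 && (Nat.blt c.y 11 &&
  (fun M => bit M (Nat.add (Nat.mul 11 c.x) c.y) &&
    (allW r (fun k => !(memW k c.w₁ && memW k c.w₂) || closedW T M k) &&
    !bit M (Nat.add (Nat.mul 11 (ev T c.w₁ c.x)) (ev T c.w₁ c.y))))
    (walk T 44 c.d c.e c.x c.y (walk T 44 c.e c.d c.x c.y 0))))))

/-- The certificates for the tables in which only the intersection property fails. -/
def certs : List Cert :=
  [⟨[2, 1, 2, 0, 1, 0, 1, 2, 0, 1, 0, 1, 2, 0, 1, 2, 0], [3, 2, 1, 2, 1, 2, 3, 2, 1, 2, 1, 2, 3, 2, 1, 2, 1, 2, 3, 2, 1, 2, 1, 2, 3], 1, 2, 0, 9⟩,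
   ⟨[3, 2, 3, 2, 3, 2, 3, 2, 3, 2], [1, 0, 1, 2, 0, 1, 0, 1, 2, 0, 1, 0, 1, 0], 2, 2, 5, 9⟩,
   ⟨[2, 0, 1, 0, 1, 2, 1, 0, 1, 2, 0, 1, 0], [3, 1, 2, 3, 1, 2, 3, 1, 2, 3, 1, 2, 3], 1, 2, 4, 5⟩,
   ⟨[2, 1, 0, 1, 0, 1, 2, 1, 0, 1, 2, 1, 0, 1, 0, 1, 2], [3, 2, 3, 2, 3, 1, 2, 3, 2, 3, 1, 2, 3, 2, 3], 1, 2, 5, 6⟩,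
   ⟨[2, 1, 0, 1, 0, 1, 2, 0, 1, 0, 1, 2, 1, 0, 1, 0, 1, 2, 0], [3, 2, 3, 2, 1, 2, 3, 2, 1, 2, 3, 2, 3], 1, 2, 5, 7⟩,
   ⟨[2, 0, 1, 0, 1, 0, 1, 2, 0], [3, 2, 1, 2, 3, 1, 2, 3, 2, 1, 2, 1, 2, 1, 2, 3, 2, 3, 1, 2, 1, 2, 3], 1, 2, 8, 10⟩,
   ⟨[2, 1, 2, 0, 1, 2, 0, 1, 2, 0, 1, 2, 0, 1, 2, 0, 1, 2, 0, 1, 0], [3, 2, 3, 1, 2, 3, 2, 3, 2, 3, 2, 1, 2, 3], 1, 2, 7, 9⟩,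
   ⟨[1, 0, 1, 0, 1, 0, 1, 2, 0, 1, 0, 1, 0, 1, 0, 1, 2, 0, 1, 0, 1, 0, 1, 0, 1], [3, 2, 3, 2, 3, 2, 3, 2, 3, 2, 0], 0, 2, 2, 9⟩,
   ⟨[0, 1, 2, 0, 1, 2, 1, 2, 0, 1, 0], [3, 2, 1, 2, 1, 2, 3], 1, 2, 9, 10⟩,
   ⟨[4, 3, 2, 3, 4, 2, 3, 4, 2, 3, 2, 3, 4, 3, 2], [1, 2, 3, 2, 3, 2, 3, 1, 2, 1], 2, 3, 5, 7⟩,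
   ⟨[4, 3, 2, 3, 2, 3, 2, 3, 4, 3, 2, 3, 2, 3, 2, 3, 4], [1, 2, 1, 2, 3, 2, 1, 2, 1], 2, 3, 6, 9⟩,
   ⟨[2, 1, 2, 0, 1, 2, 1, 0, 1, 2, 1, 2, 0, 1, 2, 1], [3, 1, 2, 1, 2, 3, 2, 1, 2, 3], 1, 2, 4, 8⟩,
   ⟨[2, 0, 1, 2, 0, 1, 2, 0, 1, 2, 0, 1, 0], [3, 1, 2, 3, 2, 1, 2, 3, 2, 3, 1, 2, 3], 1, 2, 6, 7⟩,
   ⟨[3, 2, 3, 2, 3, 2, 3, 2, 3, 2], [1, 2, 0, 1, 2, 1, 2, 1, 0, 1, 2, 1, 2, 1, 2, 0, 1], 2, 2, 4, 9⟩,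
   ⟨[3, 0, 1, 0, 1, 0, 1, 0, 1, 0], [2, 1, 2, 1, 2, 3, 2, 1, 2, 1, 2, 3, 2, 1, 2, 1, 2], 1, 3, 4, 10⟩,
   ⟨[1, 0, 1, 2, 1, 2, 1, 0, 1, 2, 1, 2, 1, 0], [3, 2, 1, 2, 3, 2, 1, 2, 1, 2, 3, 2, 3], 1, 2, 9, 10⟩,
   ⟨[4, 3, 2, 3, 4, 3, 2, 3, 2, 3, 2, 3, 4, 2, 3, 2, 3, 4, 3], [1, 2, 1, 2, 3, 2, 1, 2, 1], 2, 3, 6, 7⟩,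
   ⟨[0, 1, 2, 0, 1, 2, 1, 0, 1, 0, 1, 0, 1, 2, 1, 2, 0, 1, 0], [3, 2, 1, 2, 3, 2, 1, 2, 3], 1, 2, 6, 10⟩,
   ⟨[0, 1, 2, 1, 2, 1, 0, 1, 2, 1, 2, 1, 0], [3, 2, 3, 2, 3, 2, 1, 2, 1, 2, 1, 2, 3, 2, 3, 2, 3], 1, 2, 8, 9⟩,
   ⟨[2, 1, 2, 1, 2, 0, 1, 2, 0, 1, 2, 0, 1, 0, 1, 2, 1, 2, 1, 0, 1, 0], [3, 1, 2, 3, 1, 2, 3, 1, 2, 3], 1, 2, 7, 8⟩,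
   ⟨[2, 1, 2, 1, 2, 0, 1, 2, 0, 1, 2, 0, 1, 0], [3, 1, 2, 3, 1, 2, 3, 1, 2, 3, 2, 1, 2, 1, 2, 3, 2, 3], 1, 2, 4, 6⟩,
   ⟨[2, 0, 1, 2, 1, 0, 1, 2, 1, 0, 1, 2, 1, 2, 0], [3, 2, 3, 1, 2, 3, 1, 2, 1, 2, 3, 1, 2, 3, 1, 2, 3], 1, 2, 8, 9⟩,
   ⟨[3, 1, 0, 1, 0, 1, 0, 1, 0, 1, 0], [2, 3, 1, 2, 3, 2, 3, 2, 3, 1, 2, 3, 2, 3, 1, 2, 3, 2, 3, 2, 3, 1, 2], 1, 3, 4, 8⟩,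
   ⟨[0, 1, 2, 1, 0, 1, 2, 1, 0, 1, 2, 1, 0, 1, 0, 1, 2, 1, 0, 1, 2, 1, 0, 1, 2, 1, 0], [2, 3, 2, 3, 1, 2, 3, 2], 1, 2, 4, 9⟩,
   ⟨[2, 1, 0, 1, 0, 1, 2, 1, 2, 1, 0, 1, 2, 1, 0, 1, 2, 1, 2, 0], [3, 2, 3, 2, 3, 1, 2, 3, 1, 2, 1, 2, 3, 2, 1, 2, 3], 1, 2, 8, 10⟩]

/-- A complete table is excluded: the split generator is odd, some `G_j` is transitive, or the
intersection property fails. -/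
def refuted (r I T : ℕ) : Bool :=
  oddL T I || (!(allW r fun j => !transW r T j) || certs.any (certOK r T))

/-- Enumerate the ways to complete row `I`, from vertex `v` on. The sides of the split are the
vertices below and from `nA`. -/
def searchI (r I nA : ℕ) : ℕ → ℕ → ℕ → Bool
  | 0, _, _ => false
  | fuel + 1, T, v =>
    cond (Nat.beq v 11) (refuted r I T) <|
    cond (Nat.beq (get T I v) 0)
      (allW 11 fun w => !(cand T I v w && (Nat.blt w nA == Nat.blt v nA)) ||
        tryE r T I v w fun T' => searchI r I nA fuel T' (Nat.succ v))
      (searchI r I nA fuel T (Nat.succ v))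

/-- Enumerate the rows `j ≠ I`, starting from the position `(v, j)`, when `n` vertices have been
named so far. While `nA = 0` the vertices belong to the `G_I`-orbit of vertex `0`; once this orbit
is complete, `nA` is its size, and vertex `nA` is the other end of the split. The function returns
`true` if no admissible configuration extends the table. -/
def search (r I : ℕ) : ℕ → ℕ → ℕ → ℕ → ℕ → ℕ → Bool
  | 0, _, _, _, _, _ => false
  | fuel + 1, T, n, nA, v, j =>
    cond (Nat.beq v n)
      (cond (Nat.beq nA 0)
        (Nat.beq n 1 ||
          (Nat.beq (get T I 0) 0 && search r I fuel (setE T I 0 n) (Nat.succ n) n n 0))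
        (!Nat.beq n 11 || (!(allW r fun k => Nat.beq k I || !oddL T k) ||
          searchI r I nA 12 T 0))) <|
    cond (Nat.beq j r) (search r I fuel T n nA (Nat.succ v) 0) <|
    cond (Nat.beq j I || !Nat.beq (get T j v) 0) (search r I fuel T n nA v (Nat.succ j)) <|
    cond (Nat.beq v nA && far j I)
      (tryE r T j v v fun T' => search r I fuel T' n nA v (Nat.succ j)) <|
    (allW n fun w => !cand T j v w ||
      tryE r T j v w fun T' => search r I fuel T' n nA v (Nat.succ j)) &&
    (Nat.beq n (cond (Nat.beq nA 0) 5 11) ||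
      tryE r T j v n fun T' => search r I fuel T' (Nat.succ n) nA v (Nat.succ j))


/-! ### Soundness of the table operations -/

theorem get_put {T j v x k u : ℕ} (hv : v < 16) (hu : u < 16) (hx : x < 16) :
    get (put T j v x) k u = Nat.lor (get T k u) (if k = j ∧ u = v then x else 0) := by
  have h15 : ∀ m i : ℕ, (Nat.land m 15).testBit i = (decide (i < 4) && m.testBit i) := by
    intro m i
    have : Nat.land m 15 = m % 2 ^ 4 := Nat.and_two_pow_sub_one_eq_mod m 4
    rw [this, Nat.testBit_mod_two_pow]
  apply Nat.eq_of_testBit_eq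
  intro i
  unfold get put
  have hor : ∀ a b : ℕ, (Nat.lor a b).testBit i = (a.testBit i || b.testBit i) :=
    fun a b => Nat.testBit_or a b i
  have hshr : ∀ a b t : ℕ, (Nat.shiftRight a b).testBit t = a.testBit (b + t) :=
    fun a b t => Nat.testBit_shiftRight (i := b) (j := t) a
  have hshl : ∀ a b t : ℕ, (Nat.shiftLeft a b).testBit t = (decide (b ≤ t) && a.testBit (t - b)) :=
    fun a b t => by
      simp
  have hor' : ∀ a b t : ℕ, (Nat.lor a b).testBit t = (a.testBit t || b.testBit t) :=
    fun a b t => Nat.testBit_or a b t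
  rw [hor, h15, h15, hshr, hshr, hor', hshl]
  simp only [Nat.add_eq, Nat.mul_eq]
  have hbig : ∀ t, 4 ≤ t → x.testBit t = false := fun t ht =>
    Nat.testBit_lt_two_pow (lt_of_lt_of_le hx (Nat.pow_le_pow_right (by norm_num) ht : 2 ^ 4 ≤ 2 ^ t))
  by_cases h : k = j ∧ u = v
  · obtain ⟨rfl, rfl⟩ := h
    by_cases hi : i < 4
    · simp [hi]
    · simp [hi, hbig i (by omega)]
  · rw [if_neg h]
    by_cases hi : i < 4
    · by_cases hle : 64 * j + 4 * v ≤ 64 * k + 4 * u + i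
      · have : 4 ≤ 64 * k + 4 * u + i - (64 * j + 4 * v) := by omega
        simp [hbig _ this]
      · simp [hle]
    · simp [hi]

theorem get_setE {T j v w k u : ℕ} (hv : v < 15) (hw : w < 15) (hu : u < 16) :
    get (setE T j v w) k u = Nat.lor (Nat.lor (get T k u) (if k = j ∧ u = v then w + 1 else 0))
      (if k = j ∧ u = w then v + 1 else 0) := by
  unfold setE
  rw [get_put (by omega) hu (by omega), get_put (by omega) hu (by omega)]

theorem get_setE_ne_zero {T j v w k u : ℕ} (hv : v < 15) (hw : w < 15) (hu : u < 16)
    (h : get T k u ≠ 0) : get (setE T j v w) k u ≠ 0 := by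
  rw [get_setE hv hw hu]
  intro h0
  have h1 := (Nat.or_eq_zero_iff.1 h0).1
  exact h (Nat.or_eq_zero_iff.1 h1).1

theorem get_setE_self {T j v w : ℕ} (hv : v < 15) (hw : w < 15) :
    get (setE T j v w) j v ≠ 0 := by
  rw [get_setE hv hw (by omega)]
  intro h0
  have h1 := (Nat.or_eq_zero_iff.1 h0).1
  have h2 := (Nat.or_eq_zero_iff.1 h1).2
  simp at h2

theorem get_setE_self' {T j v w : ℕ} (hv : v < 15) (hw : w < 15) :
    get (setE T j v w) j w ≠ 0 := by
  rw [get_setE hv hw (by omega)]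
  intro h0
  have h1 := (Nat.or_eq_zero_iff.1 h0).2
  simp at h1

theorem allW_eq_true {k : ℕ} {f : ℕ → Bool} : allW k f = true ↔ ∀ i < k, f i = true := by
  induction k with
  | zero => simp [allW]
  | succ k ih =>
    simp only [allW, Bool.and_eq_true, ih]
    constructor
    · rintro ⟨h1, h2⟩ i hi
      rcases Nat.lt_succ_iff_lt_or_eq.1 hi with h | rfl
      exacts [h2 i h, h1]
    · exact fun h => ⟨h k (by omega), fun i hi => h i (by omega)⟩

/-- The data of a putative counterexample: the generators `ρ_0, …, ρ_{r-1}`, the split `{a, b}` with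
label `I`, and the indicator `side` of the `G_I`-orbit of `a`. Group-theoretic conditions are recast
in terms of invariant sets and relations. -/
structure SplitData (r I : ℕ) (ρ : ℕ → Perm (Fin 11)) (a b : Fin 11) (side : Fin 11 → Bool) :
    Prop where
  lt : I < r
  invol : ∀ j < r, ∀ x, ρ j (ρ j x) = x
  comm : ∀ j < r, ∀ k < r, far j k = true → ∀ x, ρ j (ρ k x) = ρ k (ρ j x)
  even : ∀ j < r, Perm.sign (ρ j) = 1
  /-- `G_j` is intransitive. -/
  frac : ∀ j < r, ∃ c : Fin 11 → Prop,
    (∀ k < r, k ≠ j → ∀ x, c (ρ k x) ↔ c x) ∧ ∃ x y, c x ∧ ¬ c y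
  /-- The intersection property: a permutation that can be written as two words preserves every
  relation that is preserved by their common letters. -/
  ip : ∀ w₁ w₂ : List ℕ, (∀ k ∈ w₁, k < r) → (∀ k ∈ w₂, k < r) →
    (w₁.map ρ).prod = (w₂.map ρ).prod → ∀ P : Fin 11 → Fin 11 → Prop,
    (∀ k ∈ w₁, k ∈ w₂ → ∀ x y, P x y → P (ρ k x) (ρ k y)) →
    ∀ x y, P x y → P ((w₁.map ρ).prod x) ((w₁.map ρ).prod y)
  side_inv : ∀ j < r, j ≠ I → ∀ x, side (ρ j x) = side x
  side_split : ∀ x, x ≠ a → x ≠ b → side (ρ I x) = side x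
  side_a : side a = true
  side_b : side b = false
  split : ρ I a = b
  fix_a : ∀ j < r, far j I = true → ρ j a = a
  fix_b : ∀ j < r, far j I = true → ρ j b = b
  /-- The `G_I`-orbits of `a` and `b` cover everything. -/
  reach : ∀ S : Set (Fin 11), a ∈ S → b ∈ S → (∀ j < r, j ≠ I → ∀ x ∈ S, ρ j x ∈ S) → ∀ x, x ∈ S
  card : (Finset.univ.filter fun x => side x = true).card ≤ 5
  nofix : ∃ j < r, j ≠ I ∧ ρ j a ≠ a

/-- The table `T` on the vertices below `n` describes part of the action of the `ρ_j`, where the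
vertex `v` stands for the point `φ v`. -/
structure Match (r : ℕ) (ρ : ℕ → Perm (Fin 11)) (n T : ℕ) (φ : ℕ → Fin 11) : Prop where
  inj : ∀ u < n, ∀ v < n, φ u = φ v → u = v
  tab : ∀ j < r, ∀ v < 16, get T j v ≠ 0 → v < n ∧ ∃ w < n, get T j v = w + 1 ∧ ρ j (φ v) = φ w

variable {r I : ℕ} {ρ : ℕ → Perm (Fin 11)} {a b : Fin 11} {side : Fin 11 → Bool}
  {n T : ℕ} {φ : ℕ → Fin 11}

theorem Match.le (M : Match r ρ n T φ) : n ≤ 11 := by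
  have := Fintype.card_le_of_injective (fun u : Fin n => φ u)
    (fun u v h => Fin.ext (M.inj u u.2 v v.2 h))
  simpa using this

theorem Match.zero (M : Match r ρ n T φ) {j v : ℕ} (hj : j < r) (hv : v < 16) (hn : n ≤ v) :
    get T j v = 0 := by
  by_contra h
  have := (M.tab j hj v hv h).1
  omega

theorem Match.setE (M : Match r ρ n T φ) (hinv : ∀ j < r, ∀ x, ρ j (ρ j x) = x) {j v w : ℕ}
    (hj : j < r) (hv : v < n) (hw : w < n) (h : ρ j (φ v) = φ w)
    (h0 : get T j v = 0) (h1 : get T j w = 0 ∨ get T j w = v + 1) :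
    Match r ρ n (setE T j v w) φ := by
  have hn := M.le
  have h' : ρ j (φ w) = φ v := by rw [← h, hinv j hj]
  refine ⟨M.inj, fun k hk u hu hne => ?_⟩
  rw [get_setE (by omega) (by omega) hu] at hne ⊢
  have hz : ∀ m, Nat.lor m 0 = m := fun m => Nat.or_zero m
  by_cases hkj : k = j
  · subst hkj
    by_cases huv : u = v
    · subst huv
      refine ⟨hv, w, hw, ?_, h⟩
      by_cases huw : u = w
      · subst huw; simp [h0]
      · simp [h0, huw]
    · by_cases huw : u = w
      · subst huw
        refine ⟨hw, v, hv, ?_, h'⟩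
        rcases h1 with h1 | h1 <;> simp [h1, huv]
      · simp only [huv, huw, and_false, if_false, hz] at hne ⊢
        exact M.tab k hk u hu hne
  · simp only [hkj, false_and, if_false, hz] at hne ⊢
    exact M.tab k hk u hu hne

/-- A new vertex may be introduced for any point that has no name yet. -/
theorem Match.grow (M : Match r ρ n T φ) {x : Fin 11} (hx : ∀ u < n, φ u ≠ x) :
    Match r ρ (n + 1) T (Function.update φ n x) := by
  have e : ∀ u < n, Function.update φ n x u = φ u := fun u hu =>
    Function.update_of_ne (by omega) _ _
  refine ⟨fun u hu v hv h => ?_, fun j hj v hv hne => ?_⟩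
  · rcases Nat.lt_succ_iff_lt_or_eq.1 hu with hu | rfl <;>
      rcases Nat.lt_succ_iff_lt_or_eq.1 hv with hv | rfl
    · rw [e u hu, e v hv] at h; exact M.inj u hu v hv h
    · rw [e u hu, Function.update_self] at h; exact absurd h (hx u hu)
    · rw [e v hv, Function.update_self] at h; exact absurd h.symm (hx v hv)
    · rfl
  · obtain ⟨hvn, w, hw, hg, hr⟩ := M.tab j hj v hv hne
    exact ⟨by omega, w, by omega, hg, by rw [e v hvn, e w hw, hr]⟩

/-- Squares of commuting involutions close up in a partial table that describes them. -/
theorem Match.sq (M : Match r ρ n T φ) {j k v : ℕ} (hj : j < r) (hk : k < r) (hv : v < n)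
    (hc : ∀ x, ρ j (ρ k x) = ρ k (ρ j x)) (hi : ∀ x, ρ k (ρ k x) = x) : sq T j k v = true := by
  have hn := M.le
  have dz : ∀ m : ℕ, Nat.beq m 0 = true ∨ (Nat.beq m 0 = false ∧ m ≠ 0) := by
    intro m; cases m <;> simp [Nat.beq]
  unfold SplitSearch.sq
  rcases dz (get T k v) with h | ⟨h, hy⟩
  · simp [h]
  obtain ⟨-, y, hyn, ey, hy⟩ := M.tab k hk v (by omega) hy
  rw [ey]
  simp only [Nat.pred_succ]
  rcases dz (get T j y) with h' | ⟨h', hz⟩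
  · simp [h']
  obtain ⟨-, z, hzn, ez, hz⟩ := M.tab j hj y (by omega) hz
  rw [ez]
  simp only [Nat.pred_succ]
  rcases dz (get T j v) with h'' | ⟨h'', hw⟩
  · simp [h'']
  obtain ⟨-, w, hwn, ew, hw⟩ := M.tab j hj v (by omega) hw
  rw [ew]
  simp only [Nat.pred_succ]
  have e : ρ k (φ w) = φ z := by rw [← hw, ← hc, hy, hz]
  rcases dz (get T k w) with g | ⟨g, hx⟩
  · rcases dz (get T k z) with g' | ⟨g', hu⟩
    · simp [g, g']
    · obtain ⟨-, u, hun, eu, hu⟩ := M.tab k hk z (by omega) hu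
      have : u = w := M.inj u hun w hwn (by rw [← hu, ← e, hi])
      subst this
      simp [g, eu, Nat.beq_refl]
  · obtain ⟨-, x, hxn, ex, hx⟩ := M.tab k hk w (by omega) hx
    have : x = z := M.inj x hxn z hzn (by rw [← hx, e])
    subst this
    simp [ex, Nat.beq_refl, Nat.beq]

theorem far_comm (j k : ℕ) : far j k = far k j := by unfold far; exact Bool.or_comm _ _

theorem okAt_true (D : SplitData r I ρ a b side) (M : Match r ρ n T φ) {j v w : ℕ} (hj : j < r)
    (hv : v < n) (hw : w < n) : okAt r T j v w = true := by
  unfold okAt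
  rw [allW_eq_true]
  intro k hk
  rcases hf : far j k with _ | _
  · rfl
  · simp [M.sq hj hk hv (D.comm j hj k hk hf) (D.invol k hk),
      M.sq hj hk hw (D.comm j hj k hk hf) (D.invol k hk)]

/-- If the recorded edge is present in the configuration, `tryE` passes to the new table. -/
theorem tryE_cont (D : SplitData r I ρ a b side) {j v w : ℕ} {cont : ℕ → Bool}
    (M : Match r ρ n (setE T j v w) φ) (hj : j < r) (hv : v < n) (hw : w < n)
    (h : tryE r T j v w cont = true) : cont (setE T j v w) = true := by
  have := okAt_true D M hj hv hw
  unfold tryE at h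
  simpa [this] using h

theorem Match.cand (M : Match r ρ n T φ) (hinv : ∀ j < r, ∀ x, ρ j (ρ j x) = x) {j v w : ℕ}
    (hj : j < r) (hv : v < n) (hw : w < n) (h : ρ j (φ v) = φ w) :
    (get T j w = 0 ∨ get T j w = v + 1) ∧ cand T j v w = true := by
  have hn := M.le
  have : get T j w = 0 ∨ get T j w = v + 1 := by
    by_cases h0 : get T j w = 0
    · exact Or.inl h0
    · obtain ⟨-, u, hu, eu, hu'⟩ := M.tab j hj w (by omega) h0
      have : u = v := M.inj u hu v hv (by rw [← hu', ← h, hinv j hj])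
      subst this
      exact Or.inr eu
  refine ⟨this, ?_⟩
  unfold SplitSearch.cand
  rcases this with h | h <;> simp [h, Nat.beq_refl]

/-! ### Soundness of the refutation of a complete table -/

/-- The table is complete: every vertex names a point and every entry is known. -/
structure Full (r : ℕ) (ρ : ℕ → Perm (Fin 11)) (T : ℕ) (φ : ℕ → Fin 11) : Prop where
  surj : ∀ x, ∃ u < 11, φ u = x
  inj : ∀ u < 11, ∀ v < 11, φ u = φ v → u = v
  lt : ∀ j < r, ∀ v < 11, Nat.pred (get T j v) < 11
  eq : ∀ j < r, ∀ v < 11, get T j v ≠ 0 ∧ ρ j (φ v) = φ (Nat.pred (get T j v))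

theorem Match.surj (M : Match r ρ 11 T φ) (x : Fin 11) : ∃ u < 11, φ u = x := by
  have hi : Function.Injective (fun u : Fin 11 => φ u) :=
    fun u v h => Fin.ext (M.inj u u.2 v v.2 h)
  obtain ⟨u, hu⟩ := (Finite.injective_iff_surjective.1 hi) x
  exact ⟨u, u.2, hu⟩

/-- A completely known row of the table with an odd permutation is impossible. -/
theorem oddL_false (M : Match r ρ 11 T φ) {j : ℕ} (hj : j < r)
    (hinv : ∀ x, ρ j (ρ j x) = x) (hev : Perm.sign (ρ j) = 1)
    (hfull : ∀ v < 11, get T j v ≠ 0) : oddL T j = false := by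
  have hp : ρ j ^ 2 = 1 := by
    ext x; simp [pow_two, hinv]
  have hs := Equiv.Perm.sign_of_pow_two_eq_one hp
  have hcount : ∀ (k : ℕ) (f : ℕ → Bool),
      countW k f = ((Finset.range k).filter fun i => f i = true).card := by
    intro k f
    induction k with
    | zero => rfl
    | succ k ih =>
      rw [Finset.range_add_one, Finset.filter_insert, countW, ih]
      cases h : f k <;> simp [h, Nat.add_comm]
  have hc : countW 11 (fun v => Nat.beq (get T j v) (Nat.succ v))
      = Fintype.card (Function.fixedPoints (ρ j)) := by
    rw [hcount, ← Fintype.card_coe]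
    refine Fintype.card_of_bijective (f := fun u => ⟨φ u.1, ?_⟩) ⟨?_, ?_⟩
    · obtain ⟨u, hu⟩ := u
      simp only [Finset.mem_filter, Finset.mem_range] at hu
      obtain ⟨hu, hg⟩ := hu
      obtain ⟨-, w, hw, ew, hw'⟩ := M.tab j hj u (by omega) (hfull u hu)
      have hg := Nat.eq_of_beq_eq_true hg
      have : w = u := by simp at hg; omega
      subst this
      exact hw'
    · rintro ⟨u, hu⟩ ⟨v, hv⟩ h
      simp only [Finset.mem_filter, Finset.mem_range] at hu hv
      simp only [Subtype.mk.injEq] at h ⊢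
      exact M.inj u hu.1 v hv.1 h
    · rintro ⟨x, hx⟩
      obtain ⟨u, hu, rfl⟩ := M.surj x
      refine ⟨⟨u, ?_⟩, rfl⟩
      simp only [Finset.mem_filter, Finset.mem_range]
      refine ⟨hu, ?_⟩
      obtain ⟨-, w, hw, ew, hw'⟩ := M.tab j hj u (by omega) (hfull u hu)
      have : w = u := M.inj w hw u hu (by rw [← hw']; exact hx)
      subst this
      rw [ew]
      exact Nat.beq_refl _
  unfold oddL
  rw [hc]
  by_contra hne
  have h1 := Nat.eq_of_beq_eq_true (Bool.not_eq_false _ ▸ hne)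
  have h1 : Fintype.card (Function.fixedPoints (ρ j)) % 4 = 1 := h1
  rw [hev, Fintype.card_fin] at hs
  have hle : Fintype.card (Function.fixedPoints (ρ j)) ≤ 11 := by
    simpa using set_fintype_card_le_univ (Function.fixedPoints (ρ j))
  set c := Fintype.card (Function.fixedPoints (ρ j)) with hcdef
  have : c = 1 ∨ c = 5 ∨ c = 9 := by omega
  rcases this with h | h | h <;> rw [h] at hs <;> revert hs <;> decide

theorem bit_ins {m w u : ℕ} : bit (ins m w) u = (bit m u || decide (u = w)) := by
  have h : ∀ m u : ℕ, bit m u = m.testBit u := by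
    intro m u
    unfold bit
    have h1 : Nat.land (Nat.shiftRight m u) 1 = m / 2 ^ u % 2 := by
      rw [← Nat.shiftRight_eq_div_pow]
      exact Nat.and_one_is_mod _
    rw [h1, ← Nat.toNat_testBit]
    cases m.testBit u <;> rfl
  rw [h, h]
  have h1 : (ins m w).testBit u = (m.testBit u || (Nat.shiftLeft 1 w).testBit u) :=
    Nat.testBit_or ..
  rw [h1]
  have h2 : Nat.shiftLeft 1 w = 2 ^ w := Nat.one_shiftLeft w
  rw [h2, Nat.testBit_two_pow]
  simp [eq_comm]

theorem full_of_match (M : Match r ρ 11 T φ) (h : ∀ j < r, ∀ v < 11, get T j v ≠ 0) :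
    Full r ρ T φ := by
  refine ⟨M.surj, M.inj, fun j hj v hv => ?_, fun j hj v hv => ?_⟩
  · obtain ⟨-, w, hw, ew, -⟩ := M.tab j hj v (by omega) (h j hj v hv)
    rw [ew]; exact hw
  · obtain ⟨-, w, hw, ew, hw'⟩ := M.tab j hj v (by omega) (h j hj v hv)
    rw [ew]; exact ⟨by omega, hw'⟩

theorem transW_false (F : Full r ρ T φ) {j : ℕ} {c : Fin 11 → Prop}
    (hc : ∀ k < r, k ≠ j → ∀ x, c (ρ k x) ↔ c x) (hxy : ∃ x y, c x ∧ ¬ c y) :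
    transW r T j = false := by
  -- the invariant: the mask lies in the class of vertex `0`
  let Q : ℕ → Prop := fun m => ∀ u < 11, bit m u = true → (c (φ u) ↔ c (φ 0))
  have hV : ∀ u < 11, (c (φ u) ↔ c (φ 0)) → ∀ k ≤ r, ∀ m, Q m → Q (growV T j u k m) := by
    intro u hu hcu k
    induction k with
    | zero => exact fun _ m hm => hm
    | succ k ih =>
      intro hk m hm
      refine ih (by omega) _ ?_
      rcases h : Nat.beq k j with _ | _
      · have hkj : k ≠ j := by
          rintro rfl; rw [Nat.beq_refl] at h; cases h
        intro t ht hb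
        rw [cond_false, bit_ins, Bool.or_eq_true, decide_eq_true_eq] at hb
        rcases hb with hb | rfl
        · exact hm t ht hb
        · rw [← (F.eq k (by omega) u hu).2, hc k (by omega) hkj, hcu]
      · exact hm
  have hP : ∀ u ≤ 11, ∀ m, Q m → Q (growP r T j u m) := by
    intro u
    induction u with
    | zero => exact fun _ m hm => hm
    | succ u ih =>
      intro hu m hm
      have hm' := ih (by omega) m hm
      show Q (cond (bit (growP r T j u m) u) _ _)
      rcases h : bit (growP r T j u m) u with _ | _
      · exact hm'
      · exact hV u (by omega) (hm' u (by omega) h) r le_rfl _ hm'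
  have hG : ∀ n m, Q m → Q (grow r T j n m) := by
    intro n
    induction n with
    | zero => exact fun m hm => hm
    | succ n ih => exact fun m hm => ih _ (hP 11 le_rfl m hm)
  have h1 : Q 1 := by
    intro u hu hb
    have : u = 0 := by
      revert hb; revert u; decide
    rw [this]
  by_contra h
  rw [Bool.not_eq_false] at h
  have h := allW_eq_true.1 h
  obtain ⟨x, y, hx, hy⟩ := hxy
  obtain ⟨u, hu, rfl⟩ := F.surj x
  obtain ⟨v, hv, rfl⟩ := F.surj y
  have h2 := hG 6 1 h1
  exact hy (((h2 v hv (h v hv)).trans (h2 u hu (h u hu)).symm).2 hx)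

theorem memW_iff {k : ℕ} {l : List ℕ} : memW k l = true ↔ k ∈ l := by
  induction l with
  | nil => simp [memW]
  | cons j l ih => simp [memW, ih, Nat.beq_eq]

theorem ev_spec (F : Full r ρ T φ) {w : List ℕ} (hw : ∀ k ∈ w, k < r) {v : ℕ} (hv : v < 11) :
    ev T w v < 11 ∧ (w.map ρ).prod (φ v) = φ (ev T w v) := by
  induction w with
  | nil => exact ⟨hv, rfl⟩
  | cons j l ih =>
    obtain ⟨h1, h2⟩ := ih fun k hk => hw k (List.mem_cons_of_mem _ hk)
    have hj := hw j List.mem_cons_self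
    refine ⟨F.lt j hj _ h1, ?_⟩
    rw [List.map_cons, List.prod_cons, Perm.mul_apply, h2]
    exact (F.eq j hj _ h1).2

theorem certOK_false (D : SplitData r I ρ a b side) (F : Full r ρ T φ) (c : Cert) :
    certOK r T c = false := by
  by_contra h
  rw [Bool.not_eq_false] at h
  unfold certOK at h
  simp only [Bool.and_eq_true, List.all_eq_true] at h
  obtain ⟨hev, hw1, hw2, hx, hy, hxy, hcl, hout⟩ := h
  generalize walk T 44 c.d c.e c.x c.y (walk T 44 c.e c.d c.x c.y 0) = M at hxy hcl hout
  have lt_of : ∀ {m n : ℕ}, Nat.blt m n = true → m < n := fun h => Nat.le_of_ble_eq_true h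
  have hw1 : ∀ k ∈ c.w₁, k < r := fun k hk => lt_of (hw1 k hk)
  have hw2 : ∀ k ∈ c.w₂, k < r := fun k hk => lt_of (hw2 k hk)
  have hx := lt_of hx
  have hy := lt_of hy
  rw [allW_eq_true] at hev hcl
  have heq : (c.w₁.map ρ).prod = (c.w₂.map ρ).prod := by
    refine Equiv.ext fun x => ?_
    obtain ⟨u, hu, rfl⟩ := F.surj x
    rw [(ev_spec F hw1 hu).2, (ev_spec F hw2 hu).2, Nat.eq_of_beq_eq_true (hev u hu)]
  have := D.ip c.w₁ c.w₂ hw1 hw2 heq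
    (fun x y => ∃ u < 11, ∃ v < 11, φ u = x ∧ φ v = y ∧ bit M (11 * u + v) = true) ?_
    (φ c.x) (φ c.y) ⟨c.x, hx, c.y, hy, rfl, rfl, hxy⟩
  · obtain ⟨u, hu, v, hv, e1, e2, hb⟩ := this
    rw [(ev_spec F hw1 hx).2] at e1
    rw [(ev_spec F hw1 hy).2] at e2
    have e1 := F.inj u hu _ (ev_spec F hw1 hx).1 e1
    have e2 := F.inj v hv _ (ev_spec F hw1 hy).1 e2
    subst e1 e2
    have hb : bit M (Nat.add (Nat.mul 11 (ev T c.w₁ c.x)) (ev T c.w₁ c.y)) = true := hb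
    rw [hb] at hout
    cases hout
  · rintro k hk1 hk2 x y ⟨u, hu, v, hv, rfl, rfl, hb⟩
    have hk := hw1 k hk1
    have h := hcl k hk
    rw [memW_iff.2 hk1, memW_iff.2 hk2] at h
    have h : closedW T M k = true := h
    have h := allW_eq_true.1 (allW_eq_true.1 h u hu) v hv
    have hb : bit M (Nat.add (Nat.mul 11 u) v) = true := hb
    rw [hb] at h
    exact ⟨_, F.lt k hk u hu, _, F.lt k hk v hv, (F.eq k hk u hu).2.symm, (F.eq k hk v hv).2.symm, h⟩

theorem refuted_false (D : SplitData r I ρ a b side) (M : Match r ρ 11 T φ)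
    (h : ∀ j < r, ∀ v < 11, get T j v ≠ 0) : refuted r I T = false := by
  have F := full_of_match M h
  have h1 := oddL_false M D.lt (D.invol I D.lt) (D.even I D.lt) (h I D.lt)
  have h2 : allW r (fun j => !transW r T j) = true := by
    rw [allW_eq_true]
    intro j hj
    obtain ⟨c, hc, hxy⟩ := D.frac j hj
    rw [transW_false F hc hxy]
    rfl
  have h3 : certs.any (certOK r T) = false := by
    rw [List.any_eq_false]
    intro c _
    rw [certOK_false D F c]
    exact Bool.false_ne_true
  unfold refuted
  rw [h1, h2, h3]
  rfl

/-! ### Soundness of the search -/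

theorem searchI_false (D : SplitData r I ρ a b side) {nA : ℕ} (hnA : nA < 11)
    (hside : ∀ u < 11, side (φ u) = Nat.blt u nA) (h0 : φ 0 = a) (hA : φ nA = b) :
    ∀ fuel T v, v ≤ 11 → Match r ρ 11 T φ → (∀ j < r, j ≠ I → ∀ u < 11, get T j u ≠ 0) →
      (∀ u < v, get T I u ≠ 0) → get T I 0 ≠ 0 → get T I nA ≠ 0 →
      searchI r I nA fuel T v = false := by
  intro fuel
  induction fuel with
  | zero => intros; rfl
  | succ fuel ih =>
    intro T v hv M hfull hI hI0 hIA
    unfold searchI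
    rcases hv11 : Nat.beq v 11 with _ | _
    · have hv' : v < 11 := by
        rcases Nat.lt_or_eq_of_le hv with h | rfl
        exacts [h, by cases hv11]
      rw [cond_false]
      rcases hg : Nat.beq (get T I v) 0 with _ | _
      · rw [cond_false]
        refine ih T (v + 1) hv' M hfull (fun u hu => ?_) hI0 hIA
        rcases Nat.lt_succ_iff_lt_or_eq.1 hu with hu | rfl
        · exact hI u hu
        · intro h; rw [h] at hg; cases hg
      · rw [cond_true]
        have hg := Nat.eq_of_beq_eq_true hg
        obtain ⟨w, hw, ew⟩ := M.surj (ρ I (φ v))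
        have hc := M.cand D.invol D.lt hv' hw ew.symm
        have hs : side (φ w) = side (φ v) := by
          rw [ew]
          refine D.side_split _ ?_ ?_
          · rintro rfl
            have := M.inj v hv' 0 (by omega) h0.symm
            exact hI0 (this ▸ hg)
          · rintro rfl
            have := M.inj v hv' nA hnA hA.symm
            exact hIA (this ▸ hg)
        rw [hside w hw, hside v hv'] at hs
        by_contra h
        rw [Bool.not_eq_false] at h
        have h := allW_eq_true.1 h w hw
        rw [hc.2, hs, beq_self_eq_true] at h
        have h : tryE r T I v w (fun T' => searchI r I nA fuel T' (Nat.succ v)) = true := h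
        have M' := M.setE D.invol D.lt hv' hw ew.symm hg hc.1
        have h := tryE_cont D M' D.lt hv' hw h
        have hne : ∀ k, ∀ u < 11, get T k u ≠ 0 → get (setE T I v w) k u ≠ 0 := fun k u hu =>
          get_setE_ne_zero (by omega) (by omega) (by omega)
        rw [ih _ _ hv' M' (fun j hj hjI u hu => hne j u hu (hfull j hj hjI u hu)) (fun u hu => ?_)
          (hne _ _ (by omega) hI0) (hne _ _ hnA hIA)] at h
        · cases h
        · rcases Nat.lt_succ_iff_lt_or_eq.1 hu with hu | rfl
          · exact hne _ _ (by omega) (hI u hu)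
          · exact get_setE_self (by omega) (by omega)
    · rw [cond_true]
      have := Nat.eq_of_beq_eq_true hv11
      subst this
      refine refuted_false D M fun j hj u hu => ?_
      by_cases hjI : j = I
      · subst hjI; exact hI u hu
      · exact hfull j hj hjI u hu

/-- The invariant of `search`: the arguments of the search describe the configuration, with rows
`j ≠ I` known before the position `(v, j)`. -/
structure State (r I : ℕ) (ρ : ℕ → Perm (Fin 11)) (a b : Fin 11) (side : Fin 11 → Bool)
    (T n nA v j : ℕ) (φ : ℕ → Fin 11) : Prop where
  mat : Match r ρ n T φ
  nA_lt : nA < n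
  v_le : v ≤ n
  j_le : j ≤ r
  nA_le : nA ≤ v
  base : φ 0 = a
  baseB : nA ≠ 0 → φ nA = b ∧ get T I 0 ≠ 0 ∧ get T I nA ≠ 0
  sides : ∀ u < n, side (φ u) = (Nat.beq nA 0 || Nat.blt u nA)
  full : ∀ u < v, ∀ k < r, k ≠ I → get T k u ≠ 0
  part : ∀ k < j, k ≠ I → get T k v ≠ 0

variable {nA v j : ℕ}

theorem State.setE (S : State r I ρ a b side T n nA v j φ) (hj : j < r) {w : ℕ} (hv : v < n)
    (hw : w < n) (M : Match r ρ n (SplitSearch.setE T j v w) φ) :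
    State r I ρ a b side (SplitSearch.setE T j v w) n nA v (j + 1) φ := by
  have hn := M.le
  have hne : ∀ k, ∀ u < 16, get T k u ≠ 0 → get (SplitSearch.setE T j v w) k u ≠ 0 := fun k u hu =>
    get_setE_ne_zero (by omega) (by omega) hu
  refine ⟨M, S.nA_lt, S.v_le, hj, S.nA_le, S.base, fun h => ?_, S.sides, fun u hu k hk hkI => ?_,
    fun k hk hkI => ?_⟩
  · obtain ⟨h1, h2, h3⟩ := S.baseB h
    have := S.nA_lt
    exact ⟨h1, hne _ _ (by omega) h2, hne _ _ (by omega) h3⟩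
  · exact hne _ _ (by omega) (S.full u hu k hk hkI)
  · rcases Nat.lt_succ_iff_lt_or_eq.1 hk with hk | rfl
    · exact hne _ _ (by omega) (S.part k hk hkI)
    · exact get_setE_self (by omega) (by omega)

theorem State.grow (S : State r I ρ a b side T n nA v j φ) (hv : v < n) {x : Fin 11}
    (hx : ∀ u < n, φ u ≠ x) (hs : side x = side (φ v)) :
    State r I ρ a b side T (n + 1) nA v j (Function.update φ n x) := by
  have e : ∀ u < n, Function.update φ n x u = φ u := fun u hu =>
    Function.update_of_ne (by omega) _ _
  have hlt := S.nA_lt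
  refine ⟨S.mat.grow hx, by omega, by omega, S.j_le, S.nA_le, ?_, fun h => ?_, fun u hu => ?_,
    S.full, S.part⟩
  · rw [e 0 (by omega), S.base]
  · rw [e nA hlt]; exact S.baseB h
  · rcases Nat.lt_succ_iff_lt_or_eq.1 hu with hu | rfl
    · rw [e u hu, S.sides u hu]
    · rw [Function.update_self, hs, S.sides v hv]
      have hblt : ∀ m, nA ≤ m → Nat.blt m nA = false := fun m hm => by
        rw [← Bool.not_eq_true]
        intro h
        have := Nat.le_of_ble_eq_true h
        omega
      rw [hblt v S.nA_le, hblt u (by omega)]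

/-- The orbit of `a` is complete; the other end of the split becomes the vertex `n`. -/
theorem State.startB (D : SplitData r I ρ a b side) (S : State r I ρ a b side T n 0 n j φ)
    (h0 : get T I 0 = 0) :
    State r I ρ a b side (SplitSearch.setE T I 0 n) (n + 1) n n 0 (Function.update φ n b) := by
  have hlt := S.nA_lt
  have e : ∀ u < n, Function.update φ n b u = φ u := fun u hu =>
    Function.update_of_ne (by omega) _ _
  have M1 := S.mat.grow (x := b) fun u hu h => by
    have := S.sides u hu
    rw [h, D.side_b] at this
    cases this
  have hn := M1.le
  have M2 := M1.setE D.invol D.lt (v := 0) (w := n) (by omega) (by omega)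
    (by rw [e 0 hlt, S.base, Function.update_self, D.split]) h0
    (Or.inl (S.mat.zero D.lt (by omega) le_rfl))
  refine ⟨M2, by omega, by omega, by omega, le_rfl, by rw [e 0 hlt, S.base], fun _ => ?_,
    fun u hu => ?_, fun u hu k hk hkI => ?_, fun k hk => by omega⟩
  · exact ⟨Function.update_self .., get_setE_self (by omega) (by omega),
      get_setE_self' (by omega) (by omega)⟩
  · rcases Nat.lt_succ_iff_lt_or_eq.1 hu with hu | rfl
    · rw [e u hu, S.sides u hu, show Nat.blt u n = true from Nat.ble_eq_true_of_le hu]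
      cases n <;> rfl
    · rw [Function.update_self, D.side_b]
      rcases h : Nat.blt u u with _ | _
      · cases u
        · omega
        · rfl
      · have := Nat.le_of_ble_eq_true h
        omega
  · exact get_setE_ne_zero (by omega) (by omega) (by omega) (S.full u hu k hk hkI)

/-- Once both orbits are exhausted, all eleven points have names. -/
theorem State.eleven (D : SplitData r I ρ a b side) (S : State r I ρ a b side T n nA n j φ)
    (hnA : nA ≠ 0) : n = 11 := by
  have hlt := S.nA_lt
  have hle := S.mat.le
  have hsurj := D.reach {x | ∃ u < n, φ u = x} ⟨0, by omega, S.base⟩ ⟨nA, hlt, (S.baseB hnA).1⟩ <| by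
    rintro k hk hkI x ⟨u, hu, rfl⟩
    obtain ⟨-, w, hw, -, e⟩ := S.mat.tab k hk u (by omega) (S.full u hu k hk hkI)
    exact ⟨w, hw, e.symm⟩
  have := Fintype.card_le_of_surjective (fun u : Fin n => φ u) fun x => by
    obtain ⟨u, hu, rfl⟩ := hsurj x
    exact ⟨⟨u, hu⟩, rfl⟩
  simp only [Fintype.card_fin] at this
  omega

theorem card_side_le (M : Match r ρ n T φ) (h : ∀ u < n, side (φ u) = true) :
    n ≤ (Finset.univ.filter fun x => side x = true).card := by
  have := Finset.card_le_card_of_injOn (s := Finset.range n)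
    (t := Finset.univ.filter fun x => side x = true) φ
    (fun u hu => by simpa using h u (by simpa using hu))
    (fun u hu v hv h => M.inj u (by simpa using hu) v (by simpa using hv) h)
  simpa using this

theorem search_false (D : SplitData r I ρ a b side) : ∀ fuel T n nA v j φ,
    State r I ρ a b side T n nA v j φ → search r I fuel T n nA v j = false := by
  intro fuel
  induction fuel with
  | zero => intros; rfl
  | succ fuel ih =>
    intro T n nA v j φ S
    have hlt := S.nA_lt
    have hn := S.mat.le
    unfold search
    by_cases hvn : v = n
    · subst hvn
      rw [Nat.beq_refl, cond_true]
      by_cases hnA : nA = 0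
      · subst hnA
        rw [Nat.beq_refl, cond_true]
        rcases h1 : Nat.beq v 1 with _ | _
        · rcases h2 : Nat.beq (get T I 0) 0 with _ | _
          · rfl
          · rw [ih _ _ _ _ _ _ (S.startB D (Nat.eq_of_beq_eq_true h2))]
            rfl
        · -- the orbit of `a` would be trivial
          have := Nat.eq_of_beq_eq_true h1
          subst this
          obtain ⟨k, hk, hkI, hne⟩ := D.nofix
          obtain ⟨-, w, hw, -, e⟩ := S.mat.tab k hk 0 (by omega) (S.full 0 hlt k hk hkI)
          have : w = 0 := by omega
          subst this
          rw [S.base] at e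
          exact absurd e hne
      · have h11 := S.eleven D hnA
        subst h11
        have hb : Nat.beq nA 0 = false := by
          cases nA
          · exact absurd rfl hnA
          · rfl
        rw [hb, cond_false]
        obtain ⟨e1, e2, e3⟩ := S.baseB hnA
        have hfull : ∀ k < r, k ≠ I → ∀ u < 11, get T k u ≠ 0 :=
          fun k hk hkI u hu => S.full u hu k hk hkI
        have hodd : allW r (fun k => Nat.beq k I || !oddL T k) = true := by
          rw [allW_eq_true]
          intro k hk
          by_cases hkI : k = I
          · rw [hkI, Nat.beq_refl]; rfl
          · rw [oddL_false S.mat hk (D.invol k hk) (D.even k hk) (hfull k hk hkI)]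
            exact Bool.or_true _
        rw [hodd, searchI_false D hlt (fun u hu => by rw [S.sides u hu, hb]; rfl) S.base e1 12 T 0
          (by omega) S.mat hfull (by omega) e2 e3]
        rfl
    have hv : v < n := lt_of_le_of_ne S.v_le hvn
    have beq_f : ∀ {x y : ℕ}, x ≠ y → Nat.beq x y = false := fun h =>
      Bool.eq_false_iff.2 fun h' => h (Nat.eq_of_beq_eq_true h')
    rw [beq_f hvn, cond_false]
    by_cases hjr : j = r
    · subst hjr
      rw [Nat.beq_refl, cond_true]
      refine ih _ _ _ _ _ φ ⟨S.mat, hlt, hv, Nat.zero_le _, Nat.le_succ_of_le S.nA_le, S.base,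
        S.baseB, S.sides, fun u hu k hk hkI => ?_, fun k hk => by omega⟩
      rcases Nat.lt_succ_iff_lt_or_eq.1 hu with hu | rfl
      · exact S.full u hu k hk hkI
      · exact S.part k hk hkI
    have hj : j < r := lt_of_le_of_ne S.j_le hjr
    rw [beq_f hjr, cond_false]
    rcases hknown : (Nat.beq j I || !Nat.beq (get T j v) 0) with _ | _
    swap
    · rw [cond_true]
      refine ih _ _ _ _ _ φ ⟨S.mat, hlt, S.v_le, hj, S.nA_le, S.base, S.baseB, S.sides, S.full,
        fun k hk hkI => ?_⟩
      rcases Nat.lt_succ_iff_lt_or_eq.1 hk with hk | rfl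
      · exact S.part k hk hkI
      · intro h
        rw [h, beq_f hkI] at hknown
        cases hknown
    rw [cond_false]
    obtain ⟨hjI, hg⟩ := Bool.or_eq_false_iff.1 hknown
    have hjI : j ≠ I := by
      rintro rfl
      rw [Nat.beq_refl] at hjI
      cases hjI
    have hg : get T j v = 0 := Nat.eq_of_beq_eq_true (by simpa using hg)
    -- following an edge that is present in the configuration
    have follow : ∀ n' φ' w, State r I ρ a b side T n' nA v j φ' → w < n' → v < n' →
        ρ j (φ' v) = φ' w →
        tryE r T j v w (fun T' => search r I fuel T' n' nA v (Nat.succ j)) = true → False := by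
      intro n' φ' w S' hw hv' e h
      have hc := S'.mat.cand D.invol hj hv' hw e
      have M' := S'.mat.setE D.invol hj hv' hw e hg hc.1
      have h := tryE_cont D M' hj hv' hw h
      rw [ih _ _ _ _ _ _ (S'.setE hj hv' hw M')] at h
      cases h
    rcases hbase : (Nat.beq v nA && far j I) with _ | _
    swap
    · rw [cond_true, ← Bool.not_eq_true]
      obtain ⟨h1, h2⟩ := Bool.and_eq_true_iff.1 hbase
      have := Nat.eq_of_beq_eq_true h1
      subst this
      refine follow n φ v S hv hv ?_
      by_cases hv0 : v = 0
      · subst hv0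
        rw [S.base, D.fix_a j hj h2]
      · rw [(S.baseB hv0).1, D.fix_b j hj h2]
    rw [cond_false, ← Bool.not_eq_true]
    intro h
    obtain ⟨hold, hnew⟩ := Bool.and_eq_true_iff.1 h
    by_cases hx : ∃ w < n, φ w = ρ j (φ v)
    · obtain ⟨w, hw, e⟩ := hx
      have hc := S.mat.cand D.invol hj hv hw e.symm
      have h := allW_eq_true.1 hold w hw
      rw [hc.2] at h
      exact follow n φ w S hw hv e.symm h
    · have hx : ∀ u < n, φ u ≠ ρ j (φ v) := fun u hu h => hx ⟨u, hu, h⟩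
      have S' := S.grow hv hx (D.side_inv j hj hjI _)
      have hcap : Nat.beq n (cond (Nat.beq nA 0) 5 11) = false := by
        rcases hA : Nat.beq nA 0 with _ | _
        · have := S'.mat.le
          exact beq_f (by simp only [cond_false]; omega)
        · have h1 := card_side_le (side := side) S'.mat fun u hu => by rw [S'.sides u hu, hA]; rfl
          have h2 := D.card
          exact beq_f (by simp only [cond_true]; omega)
      rw [hcap] at hnew
      refine follow (n + 1) _ n S' (by omega) (by omega) ?_ hnew
      rw [Function.update_self, Function.update_of_ne (by omega)]

theorem SplitData.search_false (D : SplitData r I ρ a b side) (fuel : ℕ) :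
    search r I fuel 0 1 0 0 0 = false := by
  have hz : ∀ j v, get 0 j v = 0 := fun j v => by
    unfold get
    have : Nat.shiftRight 0 (Nat.add (Nat.mul 64 j) (Nat.mul 4 v)) = 0 := Nat.zero_shiftRight _
    rw [this]
    rfl
  refine SplitSearch.search_false D fuel 0 1 0 0 0 (fun _ => a) ⟨⟨fun u hu v hv _ => by omega,
    fun j hj v hv h => absurd (hz j v) h⟩, by omega, by omega, by omega, le_rfl, rfl,
    fun h => absurd rfl h, fun u hu => D.side_a, by omega, by omega⟩

end SplitSearch

/-! ### Reduction to the search -/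

section Orbits

variable {Ω : Type*} {H : Subgroup (Perm Ω)} {x y z : Ω}

theorem SameOrbit.refl' (x : Ω) : SameOrbit H x x := ⟨1, H.one_mem, rfl⟩

theorem SameOrbit.symm' (h : SameOrbit H x y) : SameOrbit H y x := by
  obtain ⟨g, hg, rfl⟩ := h
  exact ⟨g⁻¹, H.inv_mem hg, g.symm_apply_apply x⟩

theorem SameOrbit.trans' (h : SameOrbit H x y) (h' : SameOrbit H y z) : SameOrbit H x z := by
  obtain ⟨g, hg, rfl⟩ := h
  obtain ⟨k, hk, rfl⟩ := h'
  exact ⟨k * g, H.mul_mem hk hg, rfl⟩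

theorem SameOrbit.of_ne {r : ℕ} {ρ : Fin r → Perm Ω} {i j : Fin r} (h : j ≠ i) (x : Ω) :
    SameOrbit (Gi ρ i) x (ρ j x) :=
  ⟨ρ j, Subgroup.subset_closure ⟨j, h, rfl⟩, rfl⟩

/-- A property that is invariant under generators is invariant under the group. -/
theorem closure_inv {X : Set (Perm Ω)} {c : Ω → Prop} (h : ∀ g ∈ X, ∀ x, c (g x) ↔ c x)
    {g : Perm Ω} (hg : g ∈ Subgroup.closure X) : ∀ x, c (g x) ↔ c x := by
  induction hg using Subgroup.closure_induction with
  | mem g hg => exact h g hg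
  | one => exact fun x => Iff.rfl
  | mul g k _ _ ihg ihk => exact fun x => (ihg (k x)).trans (ihk x)
  | inv g _ ih => exact fun x => by rw [← ih (g⁻¹ x), show g (g⁻¹ x) = x from g.apply_symm_apply x]

/-- A relation that is invariant under generators is invariant under the group. -/
theorem closure_inv₂ {X : Set (Perm Ω)} {P : Ω → Ω → Prop}
    (h : ∀ g ∈ X, ∀ x y, P (g x) (g y) ↔ P x y)
    {g : Perm Ω} (hg : g ∈ Subgroup.closure X) : ∀ x y, P (g x) (g y) ↔ P x y := by
  induction hg using Subgroup.closure_induction with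
  | mem g hg => exact h g hg
  | one => exact fun x y => Iff.rfl
  | mul g k _ _ ihg ihk => exact fun x y => (ihg (k x) (k y)).trans (ihk x y)
  | inv g _ ih =>
    have e : ∀ x, g (g⁻¹ x) = x := g.apply_symm_apply
    exact fun x y => by rw [← ih (g⁻¹ x) (g⁻¹ y), e, e]

end Orbits

section Split

variable {Ω : Type*} {r : ℕ} {ρ : Fin r → Perm Ω} {i j : Fin r} {a b x : Ω}

theorem Sggi.invol' (h : Sggi ρ) (i : Fin r) (x : Ω) : ρ i (ρ i x) = x := by
  rw [← Perm.mul_apply, (h.1 i).2, Perm.one_apply]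

theorem Sggi.comm' (h : Sggi ρ) (hij : (i : ℕ) + 1 < j ∨ (j : ℕ) + 1 < i) (x : Ω) :
    ρ i (ρ j x) = ρ j (ρ i x) := by
  have e := h.2 i j hij
  have e' := congrArg (fun g => ρ j (ρ i (g x))) e
  simpa [h.invol'] using e'

theorem IsSplit.symm' (h : IsSplit ρ i a b) (hs : Sggi ρ) : IsSplit ρ i b a := by
  obtain ⟨h1, h2, h3, h4⟩ := h
  exact ⟨by rw [← h1, hs.invol'], h2.symm, fun h => h3 h.symm', fun c hc hc' => (h4 c hc hc').symm⟩

/-- All `i`-edges except the split stay inside `G_i`-orbits. -/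
theorem IsSplit.inside (h : IsSplit ρ i a b) (ha : x ≠ a) (hb : x ≠ b) :
    SameOrbit (Gi ρ i) x (ρ i x) := by
  by_contra hne
  have : ρ i x ≠ x := fun e => hne (by rw [e]; exact SameOrbit.refl' x)
  rcases h.2.2.2 x this hne with h | h
  exacts [ha h, hb h]

/-- The generators that commute with `ρ_i` permute the splits of label `i`, hence fix the ends of
the only split. -/
theorem IsSplit.fixed (h : IsSplit ρ i a b) (hs : Sggi ρ)
    (hij : (i : ℕ) + 1 < j ∨ (j : ℕ) + 1 < i) : ρ j a = a := by
  have hji : j ≠ i := by rintro rfl; omega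
  obtain ⟨h1, h2, h3, h4⟩ := h
  have e : ρ i (ρ j a) = ρ j b := by rw [hs.comm' hij, h1]
  have oa : SameOrbit (Gi ρ i) a (ρ j a) := SameOrbit.of_ne hji a
  have ob : SameOrbit (Gi ρ i) b (ρ j b) := SameOrbit.of_ne hji b
  rcases h4 (ρ j a) (by rw [e]; exact fun h => h2 ((ρ j).injective h).symm)
    (by rw [e]; exact fun h => h3 ((oa.trans' h).trans' ob.symm')) with h | h
  · exact h
  · exact absurd (h ▸ oa) h3

/-- `G_i` has only the two orbits of the ends of a split. -/
theorem IsSplit.cover (h : IsSplit ρ i a b) (hs : Sggi ρ)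
    (ht : IsTransitiveSubgroup (Subgroup.closure (Set.range ρ))) (x : Ω) :
    SameOrbit (Gi ρ i) a x ∨ SameOrbit (Gi ρ i) b x := by
  have key : ∀ j x, SameOrbit (Gi ρ i) a x ∨ SameOrbit (Gi ρ i) b x →
      SameOrbit (Gi ρ i) a (ρ j x) ∨ SameOrbit (Gi ρ i) b (ρ j x) := by
    intro j x hx
    by_cases hji : j = i
    · subst hji
      by_cases hxa : x = a
      · rw [hxa, h.1]; exact Or.inr (SameOrbit.refl' b)
      by_cases hxb : x = b
      · rw [hxb, (h.symm' hs).1]; exact Or.inl (SameOrbit.refl' a)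
      exact hx.imp (fun o => o.trans' (h.inside hxa hxb)) fun o => o.trans' (h.inside hxa hxb)
    · exact hx.imp (fun o => o.trans' (SameOrbit.of_ne hji x)) fun o =>
        o.trans' (SameOrbit.of_ne hji x)
  obtain ⟨g, hg, rfl⟩ := ht a x
  refine (closure_inv (c := fun x => SameOrbit (Gi ρ i) a x ∨ SameOrbit (Gi ρ i) b x) ?_ hg a).2
    (Or.inl (SameOrbit.refl' a))
  rintro _ ⟨j, rfl⟩ x
  exact ⟨fun h => by simpa only [hs.invol'] using key j _ h, key j x⟩

end Split

namespace SplitSearch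

open Classical in
/-- A counterexample yields the data excluded by the search. -/
theorem splitData {r : ℕ} {ρ : Fin r → Perm (Fin 11)} (hs : Sggi ρ) (hip : IntersectionProperty ρ)
    (ht : IsTransitiveSubgroup (Subgroup.closure (Set.range ρ)))
    (heven : ∀ i, Perm.sign (ρ i) = 1) (hfrac : HasFractureGraph ρ) {i : Fin r} {a b : Fin 11}
    (h : IsSplit ρ i a b)
    (hcard : (Finset.univ.filter fun x => SameOrbit (Gi ρ i) a x).card ≤ 5)
    (hno : ∀ x, ∃ g ∈ Gi ρ i, g x ≠ x) :
    SplitData r i (fun k => if hk : k < r then ρ ⟨k, hk⟩ else 1) a b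
      (fun x => decide (SameOrbit (Gi ρ i) a x)) := by
  set R : ℕ → Perm (Fin 11) := fun k => if hk : k < r then ρ ⟨k, hk⟩ else 1 with hR
  have R_eq : ∀ k (hk : k < r), R k = ρ ⟨k, hk⟩ := fun k hk => dif_pos hk
  have far_or : ∀ {j k : ℕ}, far j k = true → j + 1 < k ∨ k + 1 < j := by
    intro j k hf
    rcases Bool.or_eq_true_iff.1 hf with hf | hf
    · exact Or.inl (Nat.le_of_ble_eq_true hf)
    · exact Or.inr (Nat.le_of_ble_eq_true hf)
  have ne_i : ∀ {k : ℕ} (hk : k < r), k ≠ i → (⟨k, hk⟩ : Fin r) ≠ i :=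
    fun hk hki e => hki (congrArg Fin.val e)
  refine
    { lt := i.2
      invol := fun j hj x => by rw [R_eq j hj, hs.invol']
      comm := fun j hj k hk hf x => ?_
      even := fun j hj => by rw [R_eq j hj, heven]
      frac := fun j hj => ?_
      ip := fun w₁ w₂ hw₁ hw₂ he P hP x y hxy => ?_
      side_inv := fun j hj hji x => ?_
      side_split := fun x ha hb => ?_
      side_a := decide_eq_true (SameOrbit.refl' a)
      side_b := decide_eq_false h.2.2.1
      split := by rw [R_eq i i.2]; exact h.1
      fix_a := fun j hj hf => ?_
      fix_b := fun j hj hf => ?_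
      reach := fun S ha hb hS x => ?_
      card := by simpa using hcard
      nofix := ?_ }
  · rw [R_eq j hj, R_eq k hk]
    exact hs.comm' (far_or hf) x
  · obtain ⟨c, -, hc⟩ := hfrac ⟨j, hj⟩
    refine ⟨SameOrbit (Gi ρ ⟨j, hj⟩) c, fun k hk hkj x => ?_, c, ρ ⟨j, hj⟩ c, SameOrbit.refl' c, hc⟩
    rw [R_eq k hk]
    have o : SameOrbit (Gi ρ ⟨j, hj⟩) x (ρ ⟨k, hk⟩ x) :=
      SameOrbit.of_ne (fun e => hkj (congrArg Fin.val e)) x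
    exact ⟨fun h => h.trans' o.symm', fun h => h.trans' o⟩
  · have mem : ∀ w : List ℕ, (∀ k ∈ w, k < r) →
        (w.map R).prod ∈ Subgroup.closure (ρ '' {k : Fin r | (k : ℕ) ∈ w}) := by
      intro w hw
      refine Subgroup.list_prod_mem _ fun g hg => ?_
      obtain ⟨k, hk, rfl⟩ := List.mem_map.1 hg
      rw [R_eq k (hw k hk)]
      exact Subgroup.subset_closure ⟨_, hk, rfl⟩
    have m := Subgroup.mem_inf.2 ⟨mem w₁ hw₁, he ▸ mem w₂ hw₂⟩
    rw [hip] at m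
    refine (closure_inv₂ ?_ m x y).2 hxy
    rintro _ ⟨k, ⟨hk₁, hk₂⟩, rfl⟩ x y
    have := hP k hk₁ hk₂
    rw [R_eq k k.2] at this
    exact ⟨fun h => by simpa only [hs.invol'] using this _ _ h, this x y⟩
  · rw [R_eq j hj]
    have o : SameOrbit (Gi ρ i) x (ρ ⟨j, hj⟩ x) := SameOrbit.of_ne (ne_i hj hji) x
    exact decide_eq_decide.2 ⟨fun h => h.trans' o.symm', fun h => h.trans' o⟩
  · rw [R_eq i i.2]
    have o := h.inside ha hb
    exact decide_eq_decide.2 ⟨fun h => h.trans' o.symm', fun h => h.trans' o⟩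
  · rw [R_eq j hj]
    exact h.fixed hs (far_or hf).symm
  · rw [R_eq j hj]
    exact (h.symm' hs).fixed hs (far_or hf).symm
  · have hinv : ∀ g ∈ Gi ρ i, ∀ x, g x ∈ S ↔ x ∈ S := by
      intro g hg
      refine closure_inv ?_ hg
      rintro _ ⟨k, hk, rfl⟩ x
      have := hS k k.2 fun e => hk (Fin.ext e)
      rw [R_eq k k.2] at this
      exact ⟨fun h => by simpa only [hs.invol'] using this _ h, this x⟩
    rcases h.cover hs ht x with ⟨g, hg, rfl⟩ | ⟨g, hg, rfl⟩
    · exact (hinv g hg a).2 ha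
    · exact (hinv g hg b).2 hb
  · by_contra hfix
    obtain ⟨g, hg, hga⟩ := hno a
    refine hga ((closure_inv (c := fun x => x = a) ?_ hg a).2 rfl)
    rintro _ ⟨k, hk, rfl⟩ x
    have e : ρ k a = a := by
      by_contra hne
      exact hfix ⟨k, k.2, fun e => hk (Fin.ext e), by rw [R_eq k k.2]; exact hne⟩
    exact ⟨fun h => by rw [← hs.invol' k x, h, e], fun h => by rw [h, e]⟩

/-! ### The search -/

theorem search_3_0 : search 3 0 100 0 1 0 0 0 = true := by decide +kernel
theorem search_3_1 : search 3 1 100 0 1 0 0 0 = true := by decide +kernel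
theorem search_4_0 : search 4 0 100 0 1 0 0 0 = true := by decide +kernel
theorem search_4_1 : search 4 1 100 0 1 0 0 0 = true := by decide +kernel
theorem search_5_0 : search 5 0 100 0 1 0 0 0 = true := by decide +kernel
theorem search_5_1 : search 5 1 100 0 1 0 0 0 = true := by decide +kernel
theorem search_5_2 : search 5 2 100 0 1 0 0 0 = true := by decide +kernel

theorem search_true {r i : ℕ} (hr : r = 3 ∨ r = 4 ∨ r = 5) (hi : 2 * i < r) :
    search r i 100 0 1 0 0 0 = true := by
  rcases hr with rfl | rfl | rfl
  · rcases (by omega : i = 0 ∨ i = 1) with rfl | rfl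
    exacts [search_3_0, search_3_1]
  · rcases (by omega : i = 0 ∨ i = 1) with rfl | rfl
    exacts [search_4_0, search_4_1]
  · rcases (by omega : i = 0 ∨ i = 1 ∨ i = 2) with rfl | rfl | rfl
    exacts [search_5_0, search_5_1, search_5_2]

end SplitSearch

open Classical in
/-- The theorem for a label in the first half; the end of the split with the smaller orbit serves
as base point of the search. -/
theorem trivial_orbit_of_two_mul_lt {r : ℕ} (hr : r = 3 ∨ r = 4 ∨ r = 5)
    {ρ : Fin r → Perm (Fin 11)} (hs : Sggi ρ) (hip : IntersectionProperty ρ)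
    (ht : IsTransitiveSubgroup (Subgroup.closure (Set.range ρ)))
    (heven : ∀ i, Perm.sign (ρ i) = 1) (hfrac : HasFractureGraph ρ) {i : Fin r} {a b : Fin 11}
    (h : IsSplit ρ i a b) (hi : 2 * (i : ℕ) < r) : ∃ x : Fin 11, ∀ g ∈ Gi ρ i, g x = x := by
  by_contra hno
  push Not at hno
  have key : ∀ a b, IsSplit ρ i a b →
      ¬ (Finset.univ.filter fun x => SameOrbit (Gi ρ i) a x).card ≤ 5 := by
    intro a b h hcard
    have h1 := (SplitSearch.splitData hs hip ht heven hfrac h hcard hno).search_false 100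
    rw [SplitSearch.search_true hr hi] at h1
    cases h1
  have h1 := key a b h
  have h2 := key b a (h.symm' hs)
  have hd : Disjoint (Finset.univ.filter fun x => SameOrbit (Gi ρ i) a x)
      (Finset.univ.filter fun x => SameOrbit (Gi ρ i) b x) := by
    rw [Finset.disjoint_filter]
    exact fun x _ ha hb => h.2.2.1 (ha.trans' hb.symm')
  have h3 := Finset.card_le_univ ((Finset.univ.filter fun x => SameOrbit (Gi ρ i) a x).disjUnion
      (Finset.univ.filter fun x => SameOrbit (Gi ρ i) b x) hd)
  rw [Finset.card_disjUnion, Fintype.card_fin] at h3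
  omega

section Reversal

variable {r : ℕ} {Ω : Type*} {ρ : Fin r → Perm Ω}

theorem gi_rev (i : Fin r) : Gi (ρ ∘ Fin.rev) i.rev = Gi ρ i := by
  unfold Gi
  congr 1
  ext g
  constructor
  · rintro ⟨j, hj, rfl⟩
    exact ⟨j.rev, fun e => hj (by rw [← e, Fin.rev_rev]), rfl⟩
  · rintro ⟨j, hj, rfl⟩
    exact ⟨j.rev, fun e => hj (Fin.rev_injective e), by simp⟩

theorem sggi_rev (h : Sggi ρ) : Sggi (ρ ∘ Fin.rev) := by
  refine ⟨fun i => h.1 _, fun i j hij => h.2 _ _ ?_⟩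
  simp only [Fin.val_rev]
  omega

theorem intersectionProperty_rev (h : IntersectionProperty ρ) :
    IntersectionProperty (ρ ∘ Fin.rev) := by
  intro J K
  rw [Set.image_comp, Set.image_comp, Set.image_comp, h, Set.image_inter Fin.rev_injective]

theorem hasFractureGraph_rev (h : HasFractureGraph ρ) : HasFractureGraph (ρ ∘ Fin.rev) := by
  intro i
  obtain ⟨a, h1, h2⟩ := h i.rev
  refine ⟨a, h1, ?_⟩
  rw [← gi_rev, Fin.rev_rev] at h2
  exact h2

theorem isSplit_rev {i : Fin r} {a b : Ω} (h : IsSplit ρ i a b) :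
    IsSplit (ρ ∘ Fin.rev) i.rev a b := by
  unfold IsSplit
  rw [gi_rev, Function.comp_apply, Fin.rev_rev]
  exact h

end Reversal

/-- If Γ is an even transitive string C-group of degree 11 of
rank r ∈ {3,4,5} admitting a fracture graph, and `i` is the label of a split,
then `G_i` has a trivial (singleton) orbit. -/
theorem statement8 {r : ℕ} (hr : r = 3 ∨ r = 4 ∨ r = 5) (ρ : Fin r → Perm (Fin 11))
    (hsggi : Sggi ρ) (hip : IntersectionProperty ρ)
    (htrans : IsTransitiveSubgroup (Subgroup.closure (Set.range ρ)))
    (heven : ∀ i, Perm.sign (ρ i) = 1)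
    (hfrac : HasFractureGraph ρ)
    (i : Fin r) (a b : Fin 11) (hsplit : IsSplit ρ i a b) :
    ∃ x : Fin 11, ∀ g ∈ Gi ρ i, g x = x := by
  by_cases hi : 2 * (i : ℕ) < r
  · exact trivial_orbit_of_two_mul_lt hr hsggi hip htrans heven hfrac hsplit hi
  · -- reverse the order of the generators
    rw [← gi_rev]
    refine trivial_orbit_of_two_mul_lt hr (sggi_rev hsggi) (intersectionProperty_rev hip) ?_
      (fun j => heven _) (hasFractureGraph_rev hfrac) (isSplit_rev hsplit) ?_
    · rwa [Fin.rev_surjective.range_comp]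
    · rw [Fin.val_rev]
      have := i.2
      omega
end

section
/- Let Γ = (G, (ρ_0, …, ρ_{r−1})) be an even transitive string C-group of degree 11 of rank r ∈ {4,5} admitting a fracture graph, let {a,b} be an i-split with ρ_i(a) = b, and suppose G_i has exactly two orbits O₁ ∋ a and O₂ ∋ b. Let τ = (a b), let H = ⟨ρ_0, …, ρ_{i−1}, ρ_i·τ, ρ_{i+1}, …, ρ_{r−1}⟩ (which preserves both O₁ and O₂), and let A and B be the permutation groups induced by H on O₁ and O₂ respectively. Then A and B cannot both be imprimitive. -/
/-!
The claim is arithmetic. If a group acts transitively on a finite set `O` and preserves a partition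
of `O` into at least two blocks of size at least two, then all blocks have the same size, so `|O|`
is composite (`ImprimitiveOn.exists_ncard_eq_mul`). The two orbits of `G_i` partition the 11 points,
and 11 is not a sum of two composite numbers: the composites below 11 are 4, 6, 8, 9, 10, with
complements 7, 5, 3, 2, 1 (`mul_add_mul_ne_eleven`).
-/

open Equiv

/-- The action of `H` on the invariant set `O` is transitive. -/
def TransitiveOn {Ω : Type*} (H : Subgroup (Perm Ω)) (O : Set Ω) : Prop :=
  ∀ x ∈ O, ∀ y ∈ O, ∃ g ∈ H, g x = y

/-- `H` preserves a partition of `O` into at least two blocks, each of size at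
least two. -/
def HasBlockSystemOn {Ω : Type*} (H : Subgroup (Perm Ω)) (O : Set Ω) : Prop :=
  ∃ P : Set (Set Ω),
    (∀ B ∈ P, B ⊆ O ∧ 2 ≤ B.ncard) ∧
    ⋃₀ P = O ∧
    (∀ B ∈ P, ∀ C ∈ P, B ≠ C → Disjoint B C) ∧
    2 ≤ P.ncard ∧
    (∀ g ∈ H, ∀ B ∈ P, (⇑g '' B) ∈ P)

/-- The action of `H` on `O` is imprimitive: transitive, preserving a partition
into at least two blocks each of size at least two. -/
def ImprimitiveOn {Ω : Type*} (H : Subgroup (Perm Ω)) (O : Set Ω) : Prop :=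
  TransitiveOn H O ∧ HasBlockSystemOn H O

/-- The action of `H` on `O` is primitive: transitive, and preserving no
partition into at least two blocks each of size at least two. -/
def PrimitiveOn {Ω : Type*} (H : Subgroup (Perm Ω)) (O : Set Ω) : Prop :=
  TransitiveOn H O ∧ ¬ HasBlockSystemOn H O

/-- The size of a finite set carrying an imprimitive action is composite: it is the product of the
number of blocks and the common block size. -/
theorem ImprimitiveOn.exists_ncard_eq_mul {Ω : Type*} [Finite Ω] {H : Subgroup (Perm Ω)}
    {O : Set Ω} (h : ImprimitiveOn H O) : ∃ m k : ℕ, 2 ≤ m ∧ 2 ≤ k ∧ O.ncard = m * k := by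
  obtain ⟨htr, P, hP, hU, hdisj, hcard, hinv⟩ := h
  obtain ⟨B₀, hB₀⟩ : P.Nonempty := Set.nonempty_of_ncard_ne_zero (by omega)
  have hne : ∀ B ∈ P, B.Nonempty := fun B hB =>
    Set.nonempty_of_ncard_ne_zero (by have := (hP B hB).2; omega)
  -- An element of `H` moving a point of `B₀` into `C` maps `B₀` to a block meeting `C`, i.e. to `C`.
  have heq : ∀ C ∈ P, C.ncard = B₀.ncard := by
    intro C hC
    obtain ⟨x, hx⟩ := hne B₀ hB₀
    obtain ⟨y, hy⟩ := hne C hC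
    obtain ⟨g, hg, rfl⟩ := htr x ((hP _ hB₀).1 hx) y ((hP _ hC).1 hy)
    have himg : g '' B₀ = C := by
      by_contra hcon
      exact Set.disjoint_left.1 (hdisj _ (hinv g hg B₀ hB₀) C hC hcon) ⟨x, hx, rfl⟩ hy
    rw [← himg, Set.ncard_image_of_injective _ g.injective]
  refine ⟨P.ncard, B₀.ncard, hcard, (hP _ hB₀).2, ?_⟩
  rw [← hU, Set.sUnion_eq_biUnion,
    (Set.toFinite P).ncard_biUnion (fun _ _ => Set.toFinite _)
      (fun B hB C hC hBC => hdisj B hB C hC hBC),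
    finsum_mem_congr rfl heq, finsum_mem_eq_finite_toFinset_sum _ (Set.toFinite P),
    Finset.sum_const, smul_eq_mul, ← Set.ncard_eq_toFinset_card]

/-- 11 is not the sum of two composite numbers. -/
theorem mul_add_mul_ne_eleven {m k n l : ℕ} (hm : 2 ≤ m) (hk : 2 ≤ k) (hn : 2 ≤ n) (hl : 2 ≤ l) :
    m * k + n * l ≠ 11 := by
  intro h
  have : m ≤ 5 := by nlinarith
  have : k ≤ 5 := by nlinarith
  have : n ≤ 5 := by nlinarith
  interval_cases m <;> interval_cases k <;> interval_cases n <;> omega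

/-- With `{a,b}` an `i`-split of an even transitive string
C-group of degree 11 of rank r ∈ {4,5} with a fracture graph, `G_i` having
exactly the two orbits `O₁ ∋ a` and `O₂ ∋ b`, and `H` the group generated by
the `ρ_j` with `ρ_i` replaced by `ρ_i · (a b)` (which preserves `O₁` and `O₂`),
the permutation groups induced by `H` on `O₁` and `O₂` cannot both be
imprimitive. -/
theorem statement10 {r : ℕ} (hr : r = 4 ∨ r = 5) (ρ : Fin r → Perm (Fin 11))
    (hsggi : Sggi ρ) (hip : IntersectionProperty ρ)
    (htrans : IsTransitiveSubgroup (Subgroup.closure (Set.range ρ)))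
    (heven : ∀ i, Perm.sign (ρ i) = 1)
    (hfrac : HasFractureGraph ρ)
    (i : Fin r) (a b : Fin 11) (hsplit : IsSplit ρ i a b)
    (horbits : ∀ x : Fin 11, SameOrbit (Gi ρ i) a x ∨ SameOrbit (Gi ρ i) b x) :
    ¬ (ImprimitiveOn
          (Subgroup.closure (Set.range (Function.update ρ i (ρ i * Equiv.swap a b))))
          {x | SameOrbit (Gi ρ i) a x} ∧
        ImprimitiveOn
          (Subgroup.closure (Set.range (Function.update ρ i (ρ i * Equiv.swap a b))))
          {x | SameOrbit (Gi ρ i) b x}) := by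
  rintro ⟨hA, hB⟩
  obtain ⟨m, k, hm, hk, h₁⟩ := hA.exists_ncard_eq_mul
  obtain ⟨n, l, hn, hl, h₂⟩ := hB.exists_ncard_eq_mul
  have hdisj : Disjoint {x | SameOrbit (Gi ρ i) a x} {x | SameOrbit (Gi ρ i) b x} := by
    rw [Set.disjoint_left]
    rintro x ⟨g, hg, hgx⟩ ⟨g', hg', hgx'⟩
    refine hsplit.2.2.1 ⟨g'⁻¹ * g, mul_mem (inv_mem hg') hg, ?_⟩
    rw [Perm.mul_apply, hgx, Perm.inv_eq_iff_eq, hgx']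
  have hunion : {x | SameOrbit (Gi ρ i) a x} ∪ {x | SameOrbit (Gi ρ i) b x} = Set.univ :=
    Set.eq_univ_of_forall horbits
  have hsum := Set.ncard_union_eq hdisj
  rw [hunion, Set.ncard_univ, Nat.card_eq_fintype_card, Fintype.card_fin, h₁, h₂] at hsum
  exact mul_add_mul_ne_eleven hm hk hn hl hsum.symm
end

section
/- Let Γ = (G, (ρ_0, …, ρ_{r−1})) be an even transitive string C-group of degree 11 of rank r ∈ {4,5} admitting a fracture graph, let {a,b} be an i-split with ρ_i(a) = b, and suppose G_i has exactly two orbits O₁ ∋ a and O₂ ∋ b. Let τ = (a b), let H = ⟨ρ_0, …, ρ_{i−1}, ρ_i·τ, ρ_{i+1}, …, ρ_{r−1}⟩ (which preserves both O₁ and O₂), and let B be the permutation group induced by H on O₂. If |O₁| = 2 (so |O₂| = 9), then B is primitive. -/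
/-!
Transitivity on `O₂` is inherited from `G_i ≤ H`. For primitivity, suppose that there is a block
system; by transitivity it consists of three blocks of size three, and it is preserved by all the
`ρ m` with `m ≠ i`. Only these generators are used below.

Write `O₁ = {a, c}`. Uniqueness of the split gives `ρ i c = c`, and it follows that each `ρ m` with
`|m - i| > 1` fixes `a`, `b` and `c`, hence also the block `X` of `b`. By transitivity on the blocks,
some neighbour `j` of `i` has `ρ j : X ↔ Y`, which fixes the third block `Z`; some `ρ k` moves
`Z`, and since it cannot commute with `ρ j`, it is the neighbour `k ≠ i` of `j` and `ρ k : Y ↔ Z`.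
All remaining generators commute with `ρ j`, preserve every block and fix `b`. As `ρ k` is even,
fixes `a`, `b`, `c` and makes three transpositions between `Y` and `Z`, it swaps the two points of
`X` other than `b`.

* If `i` has a second neighbour `l`, the generators on the side of `l` fix `b` (for `ρ l` this holds
  because it commutes with `ρ k`, whose only fixed point in `X` is `b`) and commute with those on
  the side of `j`. So they fix `O₂` pointwise, and `ρ l`, being even, is trivial: a contradiction.
* Otherwise `ρ j` has to swap `a` and `c`, and by parity it fixes `Z` pointwise. So do the remaining
  generators: they act on `X` and on `Y` in the same way, with `b` fixed, so parity leaves nothing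
  for `Z`. Hence `{b, ρ j b, ρ k (ρ j b)}` is invariant, against transitivity on nine points.

`no_block_system` is this argument; `four_dvd_support`, `even_moved` and `moved_image` supply the
parity counts.
-/

open Equiv

/-- `m` and `n` are distinct and nonadjacent in the string diagram: `|m - n| > 1`, written without
subtraction, in the form used by `StringCommuting`. -/
def Far {r : ℕ} (m n : Fin r) : Prop := (m : ℕ) + 1 < n ∨ (n : ℕ) + 1 < m

/-- The number of points of `S` moved by `f`. -/
def moved (f : Perm (Fin 11)) (S : Finset (Fin 11)) : ℕ := (S.filter fun x => f x ≠ x).card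

/-- An even involution is a product of an even number of disjoint transpositions. -/
lemma four_dvd_support {f : Perm (Fin 11)} (hf : ∀ x, f (f x) = x) (hs : Perm.sign f = 1) :
    4 ∣ f.support.card := by
  have h2 : f ^ 2 = 1 := by ext x; simp [pow_two, hf]
  have hc := Perm.cycleType_of_pow_prime_eq_one h2
  have hsum : f.cycleType.sum = 2 * f.cycleType.card := by
    conv_lhs => rw [hc]
    simp [mul_comm]
  rw [Perm.sign_of_cycleType, hsum] at hs
  rw [← Perm.sum_cycleType, hsum]
  rcases Nat.even_or_odd f.cycleType.card with h | h
  · obtain ⟨n, hn⟩ := h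
    exact ⟨n, by omega⟩
  · have : Odd (2 * f.cycleType.card + f.cycleType.card) := by
      obtain ⟨n, hn⟩ := h
      exact ⟨3 * n + 1, by omega⟩
    rw [this.neg_one_pow] at hs
    exact absurd hs (by decide)

lemma even_moved {f : Perm (Fin 11)} (hf : ∀ x, f (f x) = x) {S : Finset (Fin 11)}
    (hS : ∀ x ∈ S, f x ∈ S) : 2 ∣ moved f S := by
  have h : ∑ x ∈ S.filter (fun x => f x ≠ x), (1 : ZMod 2) = 0 := by
    refine Finset.sum_involution (fun x _ => f x) ?_ ?_ ?_ ?_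
    · intro x _
      decide
    · intro x hx _
      exact (Finset.mem_filter.1 hx).2
    · intro x hx
      rw [Finset.mem_filter] at hx ⊢
      exact ⟨hS x hx.1, fun h => hx.2 (by rw [hf] at h; exact h.symm)⟩
    · intro x _
      exact hf x
  rw [Finset.sum_const, nsmul_eq_mul, mul_one] at h
  exact (ZMod.natCast_eq_zero_iff _ _).1 h

lemma moved_le (f : Perm (Fin 11)) (S : Finset (Fin 11)) : moved f S ≤ S.card :=
  Finset.card_filter_le _ _

lemma moved_eq_zero {f : Perm (Fin 11)} {S : Finset (Fin 11)} :
    moved f S = 0 ↔ ∀ x ∈ S, f x = x := by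
  simp [moved, Finset.filter_eq_empty_iff]

lemma moved_eq_card {f : Perm (Fin 11)} {S : Finset (Fin 11)} (h : ∀ x ∈ S, f x ≠ x) :
    moved f S = S.card := by
  rw [moved, Finset.filter_true_of_mem h]

/-- If `f` commutes with `g`, then `g` carries the points of `S` moved by `f` to those of the
image of `S` under `g`. -/
lemma moved_image {f g : Perm (Fin 11)} (h : ∀ x, f (g x) = g (f x)) (S : Finset (Fin 11)) :
    moved f (S.image g) = moved f S := by
  rw [moved, moved, Finset.filter_image, Finset.card_image_of_injective _ g.injective]
  congr 1
  ext x
  simp [h]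

set_option maxHeartbeats 1000000 in
-- a single long elementary argument, whose many small steps share one budget
/-- The combinatorial core: let `O2`, with complement `{a, c}`, be the orbit of `b` under the
generators `ρ m`, `m ≠ i`, and let the generators not adjacent to `ρ i` fix `a`, `b` and `c`. Then
the generators other than `ρ i` do not preserve any system `Q` of three blocks of size three
on `O2`. -/
lemma no_block_system {r : ℕ} (ρ : Fin r → Perm (Fin 11))
    (inv : ∀ m x, ρ m (ρ m x) = x) (ne1 : ∀ m, ρ m ≠ 1)
    (comm : ∀ m n, Far m n → ∀ x, ρ m (ρ n x) = ρ n (ρ m x))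
    (heven : ∀ m, Perm.sign (ρ m) = 1)
    (i : Fin r) (a b c : Fin 11) (hac : a ≠ c) (O2 : Finset (Fin 11)) (hcard : O2.card = 9)
    (hb : b ∈ O2) (ha : a ∉ O2) (hc : c ∉ O2) (cover : ∀ x, x = a ∨ x = c ∨ x ∈ O2)
    (orb : ∀ S : Finset (Fin 11), b ∈ S → (∀ m, m ≠ i → ∀ x ∈ S, ρ m x ∈ S) → O2 ⊆ S)
    (stab : ∀ m, m ≠ i → ∀ x ∈ O2, ρ m x ∈ O2)
    (far : ∀ m, Far m i → ρ m b = b ∧ ρ m a = a ∧ ρ m c = c)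
    (mova : ∃ m, m ≠ i ∧ ρ m a = c)
    (Q : Finset (Finset (Fin 11))) (hsz : ∀ B ∈ Q, B.card = 3) (hQ : Q.card = 3)
    (disj : ∀ B ∈ Q, ∀ C ∈ Q, ∀ x, x ∈ B → x ∈ C → B = C)
    (cov : ∀ x ∈ O2, ∃ B ∈ Q, x ∈ B)
    (img : ∀ m, m ≠ i → ∀ B ∈ Q, B.image (ρ m) ∈ Q) : False := by
  have imim : ∀ m (B : Finset (Fin 11)), (B.image (ρ m)).image (ρ m) = B := fun m B => by
    rw [Finset.image_image]
    conv_rhs => rw [← Finset.image_id (s := B)]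
    exact Finset.image_congr fun x _ => inv m x
  have imc : ∀ m n, Far m n → ∀ B : Finset (Fin 11),
      (B.image (ρ m)).image (ρ n) = (B.image (ρ n)).image (ρ m) := fun m n h B => by
    rw [Finset.image_image, Finset.image_image]
    exact Finset.image_congr fun x _ => (comm m n h x).symm
  have tri : ∀ m n : Fin r, m = n ∨ Far m n ∨ (m : ℕ) + 1 = n ∨ (n : ℕ) + 1 = m := fun m n => by
    unfold Far; rw [Fin.ext_iff]; omega
  have mim : ∀ m (B C : Finset (Fin 11)), B.image (ρ m) = C → ∀ x ∈ B, ρ m x ∈ C :=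
    fun m B C h x hx => h ▸ Finset.mem_image_of_mem _ hx
  obtain ⟨X, hX, hbX⟩ := cov b hb
  -- a generator fixing `b` fixes the block `X`
  have fixX : ∀ m, m ≠ i → ρ m b = b → X.image (ρ m) = X := fun m hm h =>
    disj _ (img m hm X hX) X hX b (Finset.mem_image.2 ⟨b, hbX, h⟩) hbX
  -- transitivity on the blocks: some generator moves `X`, and it must be adjacent to `ρ i`
  obtain ⟨j, hji, hjX⟩ : ∃ j, j ≠ i ∧ X.image (ρ j) ≠ X := by
    by_contra! h
    have := Finset.card_le_card (orb X hbX fun m hm => mim m X X (h m hm))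
    rw [hsz X hX] at this
    omega
  have hadj : (j : ℕ) + 1 = i ∨ (i : ℕ) + 1 = j := by
    rcases tri j i with h | h | h
    · exact absurd h hji
    · exact absurd (fixX j hji (far j h).1) hjX
    · exact h
  obtain ⟨Y, hYdef⟩ : ∃ Y, X.image (ρ j) = Y := ⟨_, rfl⟩
  have hY : Y ∈ Q := hYdef ▸ img j hji X hX
  have hXY : X ≠ Y := fun h => hjX (hYdef.trans h.symm)
  have hYX : Y.image (ρ j) = X := by rw [← hYdef, imim]
  obtain ⟨Z, hZ⟩ : ∃ Z, Q \ {X, Y} = {Z} := by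
    apply Finset.card_eq_one.1
    rw [Finset.card_sdiff_of_subset (by simp [Finset.insert_subset_iff, hX, hY]), hQ, Finset.card_pair hXY]
  have hQm : ∀ B, B ∈ Q ↔ B = X ∨ B = Y ∨ B = Z := fun B => by
    have := Finset.ext_iff.1 hZ B
    simp only [Finset.mem_sdiff, Finset.mem_insert, Finset.mem_singleton] at this
    constructor
    · tauto
    · rintro (rfl | rfl | rfl)
      · exact hX
      · exact hY
      · exact (this.2 rfl).1
  have hZ' := Finset.ext_iff.1 hZ Z
  simp only [Finset.mem_sdiff, Finset.mem_insert, Finset.mem_singleton, iff_true, not_or] at hZ'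
  obtain ⟨hZQ, hZX, hZY⟩ := hZ'
  have hjZ : Z.image (ρ j) = Z := by
    rcases (hQm _).1 (img j hji Z hZQ) with h | h | h
    · exact absurd (by rw [← imim j Z, h, hYdef]) hZY
    · exact absurd (by rw [← imim j Z, h, hYX]) hZX
    · exact h
  -- a generator commuting with `ρ j` preserves the only block that `ρ j` preserves
  have fixZ : ∀ m, m ≠ i → Far m j → Z.image (ρ m) = Z := by
    intro m hm h
    have e := imc m j h Z
    rw [hjZ] at e
    rcases (hQm _).1 (img m hm Z hZQ) with h' | h' | h'
    · rw [h', hYdef] at e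
      exact absurd e.symm hXY
    · rw [h', hYX] at e
      exact absurd e hXY
    · exact h'
  have cX := hsz X hX
  have cY := hsz Y hY
  have cZ := hsz Z hZQ
  have dXY : ∀ x, x ∈ X → x ∉ Y := fun x h h' => hXY (disj X hX Y hY x h h')
  have dXZ : ∀ x, x ∈ X → x ∉ Z := fun x h h' => hZX (disj X hX Z hZQ x h h').symm
  have dYZ : ∀ x, x ∈ Y → x ∉ Z := fun x h h' => hZY (disj Y hY Z hZQ x h h').symm
  have mXYZ : ∀ x ∈ O2, x ∈ X ∨ x ∈ Y ∨ x ∈ Z := by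
    intro x hx
    obtain ⟨B, hB, hxB⟩ := cov x hx
    rcases (hQm B).1 hB with rfl | rfl | rfl <;> simp [hxB]
  have hO2 : O2 = X ∪ (Y ∪ Z) := by
    refine Finset.eq_of_subset_of_card_le (fun x hx => by simpa using mXYZ x hx) ?_
    rw [Finset.card_union_of_disjoint, Finset.card_union_of_disjoint]
    · omega
    · exact Finset.disjoint_left.2 dYZ
    · exact Finset.disjoint_left.2 fun x h hx => by
        rcases Finset.mem_union.1 hx with hx | hx
        · exact dXY x h hx
        · exact dXZ x h hx
  -- parity of `ρ m`, counted along the partition `{a, c} ∪ X ∪ Y ∪ Z`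
  have four : ∀ m, 4 ∣ moved (ρ m) {a, c} + moved (ρ m) X + moved (ρ m) Y + moved (ρ m) Z := by
    intro m
    have h4 := four_dvd_support (inv m) (heven m)
    have e : (ρ m).support = (({a, c} ∪ X) ∪ Y ∪ Z).filter fun x => ρ m x ≠ x := by
      ext x
      have := cover x
      rw [hO2] at this
      simp only [Finset.mem_union, Perm.mem_support, Finset.mem_filter, Finset.mem_insert,
        Finset.mem_singleton] at this ⊢
      tauto
    rw [e, Finset.filter_union, Finset.filter_union, Finset.filter_union,
      Finset.card_union_of_disjoint, Finset.card_union_of_disjoint,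
      Finset.card_union_of_disjoint] at h4
    · exact h4
    · refine Finset.disjoint_filter_filter (Finset.disjoint_left.2 fun x hx hxX => ?_)
      have hxO : x ∈ O2 := by simp [hO2, hxX]
      simp only [Finset.mem_insert, Finset.mem_singleton] at hx
      rcases hx with rfl | rfl
      · exact ha hxO
      · exact hc hxO
    · rw [← Finset.filter_union]
      refine Finset.disjoint_filter_filter (Finset.disjoint_left.2 fun x hx hxY => ?_)
      have hxO : x ∈ O2 := by simp [hO2, hxY]
      simp only [Finset.mem_union, Finset.mem_insert, Finset.mem_singleton] at hx
      rcases hx with (rfl | rfl) | hx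
      · exact ha hxO
      · exact hc hxO
      · exact dXY x hx hxY
    · rw [← Finset.filter_union, ← Finset.filter_union]
      refine Finset.disjoint_filter_filter (Finset.disjoint_left.2 fun x hx hxZ => ?_)
      have hxO : x ∈ O2 := by simp [hO2, hxZ]
      simp only [Finset.mem_union, Finset.mem_insert, Finset.mem_singleton] at hx
      rcases hx with ((rfl | rfl) | hx) | hx
      · exact ha hxO
      · exact hc hxO
      · exact dXZ x hx hxZ
      · exact dYZ x hx hxZ
  -- transitivity again: some generator moves `Z`; it cannot commute with `ρ j`
  obtain ⟨k, hki, hkZ⟩ : ∃ k, k ≠ i ∧ Z.image (ρ k) ≠ Z := by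
    by_contra! h
    have hsub : O2 ⊆ X ∪ Y := by
      refine orb _ (by simp [hbX]) fun m hm x hx => ?_
      have hx2 : x ∈ O2 := by
        rw [hO2, ← Finset.union_assoc]
        exact Finset.mem_union_left _ hx
      have hxZ : ρ m x ∉ Z := fun h' => by
        have := mim m Z Z (h m hm) _ h'
        rw [inv] at this
        rcases Finset.mem_union.1 hx with hx | hx
        · exact dXZ x hx this
        · exact dYZ x hx this
      have := mXYZ _ (stab m hm x hx2)
      rw [Finset.mem_union]
      tauto
    have := (Finset.card_le_card hsub).trans (Finset.card_union_le _ _)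
    omega
  have hkj : k ≠ j := by rintro rfl; exact hkZ hjZ
  have hadj2 : (k : ℕ) + 1 = j ∨ (j : ℕ) + 1 = k := by
    rcases tri k j with h | h | h
    · exact absurd h hkj
    · exact absurd (fixZ k hki h) hkZ
    · exact h
  have hki' : (k : ℕ) ≠ i := fun h => hki (Fin.ext h)
  have hkf : Far k i := by unfold Far; omega
  obtain ⟨kb, ka, kc⟩ := far k hkf
  have hkX : X.image (ρ k) = X := fixX k hki kb
  have hkZY : Z.image (ρ k) = Y := by
    rcases (hQm _).1 (img k hki Z hZQ) with h | h | h
    · exact absurd (by rw [← imim k Z, h, hkX]) hZX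
    · exact h
    · exact absurd h hkZ
  have hkYZ : Y.image (ρ k) = Z := by rw [← hkZY, imim]
  -- `ρ k` is a product of three transpositions on `Y ∪ Z`, so by parity it swaps the two points
  -- of `X` other than `b`
  have kX : ∀ x ∈ X, ρ k x = x → x = b := by
    intro x hx hxk
    by_contra hxb
    have h1 : moved (ρ k) X ≤ 1 := by
      have hsub : X.filter (fun y => ρ k y ≠ y) ⊆ X \ {b, x} := by
        intro y hy
        rw [Finset.mem_filter] at hy
        simp only [Finset.mem_sdiff, Finset.mem_insert, Finset.mem_singleton]
        refine ⟨hy.1, ?_⟩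
        rintro (rfl | rfl)
        · exact hy.2 kb
        · exact hy.2 hxk
      have := Finset.card_le_card hsub
      rw [Finset.card_sdiff_of_subset (by simp [Finset.insert_subset_iff, hbX, hx]),
        Finset.card_pair (Ne.symm hxb)] at this
      unfold moved
      omega
    have h2 := even_moved (inv k) (mim k X X hkX)
    have h3 : moved (ρ k) {a, c} = 0 := moved_eq_zero.2 (by simp [ka, kc])
    have h4 : moved (ρ k) Y = 3 := by
      rw [moved_eq_card, cY]
      exact fun y hy h => dYZ y hy (h ▸ mim k Y Z hkYZ y hy)
    have h5 : moved (ρ k) Z = 3 := by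
      rw [moved_eq_card, cZ]
      exact fun y hy h => dYZ y (h ▸ mim k Z Y hkZY y hy) hy
    have := four k
    omega
  -- every generator besides `ρ i`, `ρ j`, `ρ k` fixes `b` and all three blocks
  have rest : ∀ l, l ≠ i → l ≠ j → l ≠ k →
      Far l j ∧ ρ l b = b ∧ X.image (ρ l) = X ∧ Y.image (ρ l) = Y ∧ Z.image (ρ l) = Z := by
    intro l li lj lk
    have li' : (l : ℕ) ≠ i := fun h => li (Fin.ext h)
    have lj' : (l : ℕ) ≠ j := fun h => lj (Fin.ext h)
    have lk' : (l : ℕ) ≠ k := fun h => lk (Fin.ext h)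
    have hlj : Far l j := by unfold Far; omega
    have hZl := fixZ l li hlj
    have toY : X.image (ρ l) = X → Y.image (ρ l) = Y := fun h => by
      rw [← hYdef, ← imc l j hlj, h]
    by_cases hf : Far l i
    · have hX' := fixX l li (far l hf).1
      exact ⟨hlj, (far l hf).1, hX', toY hX', hZl⟩
    · have hlk : Far l k := by unfold Far at hf ⊢; omega
      have hYl : Y.image (ρ l) = Y := by
        rw [← hkZY, ← imc l k hlk, hZl]
      have hXl : X.image (ρ l) = X := by
        rw [← hYX, ← imc l j hlj, hYl]
      refine ⟨hlj, kX _ (mim l X X hXl b hbX) ?_, hXl, hYl, hZl⟩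
      rw [← comm l k hlk, kb]
  by_cases hl : ∃ l, l ≠ i ∧ l ≠ j ∧ ¬ Far l i
  · -- If `i` has a second neighbour `l`, the generators on that side of `i` commute with those on
    -- the other side and fix `b`, hence fix `O2` pointwise; being even, `ρ l` is then trivial.
    obtain ⟨l, li, lj, hlf⟩ := hl
    have li' : (l : ℕ) ≠ i := fun h => li (Fin.ext h)
    have lj' : (l : ℕ) ≠ j := fun h => lj (Fin.ext h)
    let L : Fin r → Prop := fun n => ((n : ℕ) < i ∧ (i : ℕ) < j) ∨ ((i : ℕ) < n ∧ (j : ℕ) < i)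
    have hlL : L l := by
      simp only [L]; unfold Far at hlf; omega
    classical
    have hsub := orb (O2.filter fun x => ∀ n, L n → ρ n x = x) ?_ ?_
    · have fixO : ∀ x ∈ O2, ρ l x = x := fun x hx => (Finset.mem_filter.1 (hsub hx)).2 l hlL
      have hX0 : moved (ρ l) X = 0 := moved_eq_zero.2 fun x hx => fixO x (by simp [hO2, hx])
      have hY0 : moved (ρ l) Y = 0 := moved_eq_zero.2 fun x hx => fixO x (by simp [hO2, hx])
      have hZ0 : moved (ρ l) Z = 0 := moved_eq_zero.2 fun x hx => fixO x (by simp [hO2, hx])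
      have h4 := four l
      have h2 := moved_le (ρ l) {a, c}
      rw [Finset.card_pair hac] at h2
      have h0 : moved (ρ l) {a, c} = 0 := by omega
      rw [moved_eq_zero] at h0
      refine ne1 l (Equiv.ext fun x => ?_)
      rcases cover x with rfl | rfl | h
      · exact h0 _ (by simp)
      · exact h0 _ (by simp)
      · exact fixO x h
    · refine Finset.mem_filter.2 ⟨hb, fun n hn => (rest n ?_ ?_ ?_).2.1⟩ <;>
      · rintro rfl
        simp only [L] at hn
        omega
    · intro m hm x hx
      rw [Finset.mem_filter] at hx ⊢
      refine ⟨stab m hm x hx.1, fun n hn => ?_⟩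
      by_cases hmL : L m
      · rw [hx.2 m hmL, hx.2 n hn]
      · have hmi' : (m : ℕ) ≠ i := fun h => hm (Fin.ext h)
        rw [comm n m (by simp only [L] at hn hmL; unfold Far; omega), hx.2 n hn]
  · -- `j` is the only neighbour of `i`, so `ρ j` swaps `a` and `c`
    push Not at hl
    have hja : ρ j a = c := by
      obtain ⟨m, hm, hma⟩ := mova
      by_cases hmj : m = j
      · rw [← hmj, hma]
      · exact absurd ((far m (hl m hm hmj)).2.1.symm.trans hma) hac
    have hjc : ρ j c = a := by rw [← hja, inv]
    -- parity: the number of points of `Z` moved by `ρ j` is divisible by `4`, and at most `3`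
    have jZ : ∀ x ∈ Z, ρ j x = x := by
      have h1 : moved (ρ j) {a, c} = 2 := by
        rw [moved_eq_card, Finset.card_pair hac]
        simp [hja, hjc, hac, hac.symm]
      have h2 : moved (ρ j) X = 3 := by
        rw [moved_eq_card, cX]
        exact fun y hy h => dXY y hy (h ▸ mim j X Y hYdef y hy)
      have h3 : moved (ρ j) Y = 3 := by
        rw [moved_eq_card, cY]
        exact fun y hy h => dXY y (h ▸ mim j Y X hYX y hy) hy
      have h4 := four j
      have h5 := moved_le (ρ j) Z
      rw [← moved_eq_zero]
      omega
    -- parity: `ρ l` moves the same even number of points in `X` and in `Y`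
    have lZ : ∀ l, l ≠ i → l ≠ j → l ≠ k → ∀ x ∈ Z, ρ l x = x := by
      intro l li lj lk
      obtain ⟨hlj, -, hXl, hYl, hZl⟩ := rest l li lj lk
      obtain ⟨-, la, lc⟩ := far l (hl l li lj)
      have h1 : moved (ρ l) {a, c} = 0 := moved_eq_zero.2 (by simp [la, lc])
      have h2 : moved (ρ l) Y = moved (ρ l) X := by
        rw [← hYdef, moved_image (comm l j hlj)]
      have h3 := even_moved (inv l) (mim l X X hXl)
      have h4 := even_moved (inv l) (mim l Z Z hZl)
      have h5 := moved_le (ρ l) Z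
      have h6 := four l
      rw [← moved_eq_zero]
      omega
    -- the orbit of `b` has at most three points, one in each block
    have hjbY : ρ j b ∈ Y := mim j X Y hYdef b hbX
    have hkjb : ρ k (ρ j b) ∈ Z := mim k Y Z hkYZ _ hjbY
    have hsub := orb {b, ρ j b, ρ k (ρ j b)} (by simp) ?_
    · have := (Finset.card_le_card hsub).trans Finset.card_le_three
      omega
    · intro m hm x hx
      simp only [Finset.mem_insert, Finset.mem_singleton] at hx ⊢
      by_cases hmj : m = j
      · subst hmj
        rcases hx with rfl | rfl | rfl
        · simp
        · simp [inv]
        · simp [jZ _ hkjb]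
      by_cases hmk : m = k
      · subst hmk
        rcases hx with rfl | rfl | rfl
        · simp [kb]
        · simp
        · simp [inv]
      obtain ⟨hlj, hmb, -⟩ := rest m hm hmj hmk
      rcases hx with rfl | rfl | rfl
      · simp [hmb]
      · simp [comm m j hlj, hmb]
      · simp [lZ m hm hmj hmk _ hkjb]

/-- With `{a,b}` an `i`-split of an even transitive string
C-group of degree 11 of rank r ∈ {4,5} with a fracture graph, `G_i` having
exactly the two orbits `O₁ ∋ a` and `O₂ ∋ b`, and `H` the group generated by
the `ρ_j` with `ρ_i` replaced by `ρ_i · (a b)`: if `|O₁| = 2` (so `|O₂| = 9`),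
then the permutation group induced by `H` on `O₂` is primitive. -/
theorem statement11 {r : ℕ} (hr : r = 4 ∨ r = 5) (ρ : Fin r → Perm (Fin 11))
    (hsggi : Sggi ρ) (hip : IntersectionProperty ρ)
    (htrans : IsTransitiveSubgroup (Subgroup.closure (Set.range ρ)))
    (heven : ∀ i, Perm.sign (ρ i) = 1)
    (hfrac : HasFractureGraph ρ)
    (i : Fin r) (a b : Fin 11) (hsplit : IsSplit ρ i a b)
    (horbits : ∀ x : Fin 11, SameOrbit (Gi ρ i) a x ∨ SameOrbit (Gi ρ i) b x)
    (hO1 : ({x | SameOrbit (Gi ρ i) a x} : Set (Fin 11)).ncard = 2) :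
    PrimitiveOn
      (Subgroup.closure (Set.range (Function.update ρ i (ρ i * Equiv.swap a b))))
      {x | SameOrbit (Gi ρ i) b x} := by
  obtain ⟨hinv, hstr⟩ := hsggi
  obtain ⟨hab, hne, hsep, huniq⟩ := hsplit
  have inv : ∀ m x, ρ m (ρ m x) = x := fun m x => by
    simpa using congrArg (fun g : Perm (Fin 11) => g x) (hinv m).2
  have comm : ∀ m n, Far m n → ∀ x, ρ m (ρ n x) = ρ n (ρ m x) := fun m n h x => by
    have := congrArg (fun g : Perm (Fin 11) => g (ρ n (ρ m x))) (hstr m n h)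
    simp only [Perm.coe_mul, Function.comp, Perm.coe_one, id, inv] at this
    exact this
  have refl' : ∀ x, SameOrbit (Gi ρ i) x x := fun x => ⟨1, one_mem _, rfl⟩
  have symm' : ∀ {x y}, SameOrbit (Gi ρ i) x y → SameOrbit (Gi ρ i) y x := by
    rintro x y ⟨g, hg, rfl⟩
    exact ⟨g⁻¹, inv_mem hg, by simp⟩
  have trans' : ∀ {x y z}, SameOrbit (Gi ρ i) x y → SameOrbit (Gi ρ i) y z →
      SameOrbit (Gi ρ i) x z := by
    rintro x y z ⟨g, hg, rfl⟩ ⟨h, hh, rfl⟩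
    exact ⟨h * g, mul_mem hh hg, rfl⟩
  have gen : ∀ m, m ≠ i → ∀ x, SameOrbit (Gi ρ i) x (ρ m x) := fun m hm x =>
    ⟨ρ m, Subgroup.subset_closure ⟨m, hm, rfl⟩, rfl⟩
  have hle : Gi ρ i ≤ Subgroup.closure
      (Set.range (Function.update ρ i (ρ i * Equiv.swap a b))) := by
    refine (Subgroup.closure_le _).2 ?_
    rintro _ ⟨m, hm, rfl⟩
    exact Subgroup.subset_closure ⟨m, Function.update_of_ne hm _ _⟩
  refine ⟨fun x hx y hy => ?_, ?_⟩
  · obtain ⟨g, hg, e⟩ := trans' (symm' hx) hy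
    exact ⟨g, hle hg, e⟩
  rintro ⟨P, hP, hU, hD, h2, hg⟩
  -- the second point `c` of the orbit of `a`
  obtain ⟨c, hca, hac⟩ : ∃ c, c ≠ a ∧ ({x | SameOrbit (Gi ρ i) a x} : Set (Fin 11)) = {a, c} := by
    obtain ⟨u, v, huv, e⟩ := Set.ncard_eq_two.1 hO1
    have : a ∈ ({u, v} : Set (Fin 11)) := e ▸ refl' a
    rcases this with h | h
    · exact ⟨v, h ▸ huv.symm, h ▸ e⟩
    · have h : a = v := h
      exact ⟨u, h ▸ huv, by rw [e, Set.pair_comm, h]⟩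
  have horb : ∀ x, SameOrbit (Gi ρ i) a x ↔ x = a ∨ x = c := fun x => by
    simpa using Set.ext_iff.1 hac x
  -- `{a, b}` is the only `i`-edge leaving `{a, c}`
  have hic : ρ i c = c := by
    by_contra h
    by_cases hs : SameOrbit (Gi ρ i) c (ρ i c)
    · rcases (horb _).1 (trans' ((horb c).2 (.inr rfl)) hs) with h' | h'
      · have := inv i c
        rw [h', hab] at this
        exact hsep (this ▸ (horb c).2 (.inr rfl))
      · exact h h'
    · rcases huniq c h hs with h' | h'
      · exact hca h'
      · exact hsep (h' ▸ (horb c).2 (.inr rfl))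
  have far : ∀ m, Far m i → ρ m b = b ∧ ρ m a = a ∧ ρ m c = c := by
    intro m hm
    have hmi : m ≠ i := by rintro rfl; unfold Far at hm; omega
    have hmc : ρ m a ≠ c := by
      intro h
      have h1 := comm m i hm a
      rw [hab, h, hic] at h1
      exact hsep (trans' ((horb c).2 (.inr rfl)) (symm' (h1 ▸ gen m hmi b)))
    have hma : ρ m a = a := ((horb _).1 (gen m hmi a)).resolve_right hmc
    refine ⟨by rw [← hab, comm m i hm, hma], hma, ?_⟩
    refine ((horb _).1 (trans' ((horb c).2 (.inr rfl)) (gen m hmi c))).resolve_left fun h => ?_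
    exact hca ((ρ m).injective (h.trans hma.symm))
  classical
  set O2 : Finset (Fin 11) := Finset.univ.filter (fun x => SameOrbit (Gi ρ i) b x) with hO2
  have mO2 : ∀ x, x ∈ O2 ↔ SameOrbit (Gi ρ i) b x := fun x => by simp [hO2]
  have haO : a ∉ O2 := fun h => hsep (symm' ((mO2 a).1 h))
  have hcO : c ∉ O2 := fun h =>
    hsep (symm' (trans' ((mO2 c).1 h) (symm' ((horb c).2 (.inr rfl)))))
  have cover : ∀ x, x = a ∨ x = c ∨ x ∈ O2 := fun x => by
    rcases horbits x with h | h
    · rcases (horb x).1 h with h | h <;> simp [h]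
    · exact .inr (.inr ((mO2 x).2 h))
  have hcard : O2.card = 9 := by
    have h1 : O2 = Finset.univ \ {a, c} := by
      ext x
      simp only [Finset.mem_sdiff, Finset.mem_univ, true_and, Finset.mem_insert,
        Finset.mem_singleton]
      have := cover x
      grind
    rw [h1, Finset.card_sdiff_of_subset (Finset.subset_univ _), Finset.card_pair hca.symm]
    simp
  have orb : ∀ S : Finset (Fin 11), b ∈ S → (∀ m, m ≠ i → ∀ x ∈ S, ρ m x ∈ S) → O2 ⊆ S := by
    intro S hb hS x hx
    obtain ⟨g, hgG, rfl⟩ := (mO2 x).1 hx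
    have : ∀ y, y ∈ S ↔ g y ∈ S := by
      refine Subgroup.closure_induction (p := fun g _ => ∀ y, y ∈ S ↔ g y ∈ S)
        ?_ ?_ ?_ ?_ hgG
      · rintro _ ⟨m, hm, rfl⟩ y
        exact ⟨hS m hm y, fun h => by simpa [inv] using hS m hm _ h⟩
      · simp
      · intro g h _ _ h1 h2 y
        rw [h2 y, h1 (h y)]; rfl
      · intro g _ h1 y
        rw [h1 (g⁻¹ y)]; simp
    exact (this b).1 hb
  have stab : ∀ m, m ≠ i → ∀ x ∈ O2, ρ m x ∈ O2 := fun m hm x hx =>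
    (mO2 _).2 (trans' ((mO2 x).1 hx) (gen m hm x))
  have mova : ∃ m, m ≠ i ∧ ρ m a = c := by
    by_contra! h
    obtain ⟨g, hgG, e⟩ := (horb c).2 (.inr rfl)
    have : g a = a := by
      refine Subgroup.closure_induction (p := fun g _ => g a = a) ?_ ?_ ?_ ?_ hgG
      · rintro _ ⟨m, hm, rfl⟩
        exact ((horb _).1 (gen m hm a)).resolve_right (h m hm)
      · rfl
      · intro g h _ _ h1 h2
        rw [Perm.mul_apply, h2, h1]
      · intro g _ h1
        exact Perm.inv_eq_iff_eq.2 h1.symm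
    exact hca (e.symm.trans this)
  -- the block system as a finset of finsets
  set Q : Finset (Finset (Fin 11)) := Finset.univ.filter (fun B => (B : Set (Fin 11)) ∈ P) with hQ
  have mQ : ∀ B : Finset (Fin 11), B ∈ Q ↔ (B : Set (Fin 11)) ∈ P := fun B => by simp [hQ]
  have disj : ∀ B ∈ Q, ∀ C ∈ Q, ∀ x, x ∈ B → x ∈ C → B = C := by
    intro B hB C hC x hxB hxC
    by_contra hBC
    exact Set.disjoint_left.1 (hD B ((mQ B).1 hB) C ((mQ C).1 hC)
      (fun h => hBC (Finset.coe_injective h))) hxB hxC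
  have sub : ∀ B ∈ Q, B ⊆ O2 := fun B hB x hx =>
    (mO2 x).2 ((hP B ((mQ B).1 hB)).1 hx)
  have cov : ∀ x ∈ O2, ∃ B ∈ Q, x ∈ B := by
    intro x hx
    have : x ∈ ⋃₀ P := by rw [hU]; exact (mO2 x).1 hx
    obtain ⟨B, hB, hxB⟩ := this
    exact ⟨B.toFinset, (mQ _).2 (by simpa using hB), by simpa using hxB⟩
  have imgG : ∀ g ∈ Gi ρ i, ∀ B ∈ Q, B.image g ∈ Q := by
    intro g hgG B hB
    rw [mQ, Finset.coe_image]
    exact hg g (hle hgG) B ((mQ B).1 hB)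
  have img : ∀ m, m ≠ i → ∀ B ∈ Q, B.image (ρ m) ∈ Q := fun m hm =>
    imgG _ (Subgroup.subset_closure ⟨m, hm, rfl⟩)
  have hQP : Q.card = P.ncard := by
    rw [← Set.ncard_coe_finset,
      ← Set.ncard_image_of_injective (Q : Set (Finset (Fin 11))) Finset.coe_injective]
    congr 1
    ext B
    constructor
    · rintro ⟨C, hC, rfl⟩
      exact (mQ C).1 hC
    · intro hB
      exact ⟨B.toFinset, (mQ _).2 (by simpa using hB), by simp⟩
  -- all blocks have the same size, so there are three of size three
  obtain ⟨X, hX, hbX⟩ := cov b ((mO2 b).2 (refl' b))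
  have hsz : ∀ B ∈ Q, B.card = X.card := by
    intro B hB
    have h2B := (hP B ((mQ B).1 hB)).2
    rw [Set.ncard_coe_finset] at h2B
    obtain ⟨x, hx⟩ := Finset.card_pos.1 (by omega : 0 < B.card)
    obtain ⟨g, hgG, e⟩ := symm' ((mO2 x).1 (sub B hB hx))
    rw [← Finset.card_image_of_injective B g.injective,
      disj _ (imgG g hgG B hB) X hX b (Finset.mem_image.2 ⟨x, hx, e⟩) hbX]
  have hprod : Q.card * X.card = 9 := by
    have h1 : Q.biUnion id = O2 := by
      ext x
      simp only [Finset.mem_biUnion, id]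
      exact ⟨fun ⟨B, hB, hx⟩ => sub B hB hx, cov x⟩
    rw [← hcard, ← h1, Finset.card_biUnion]
    · exact (Finset.sum_const_nat hsz).symm
    intro B hB C hC hBC
    exact Finset.disjoint_left.2 fun x h h' => hBC (disj B hB C hC x h h')
  have hX2 := (hP X ((mQ X).1 hX)).2
  rw [Set.ncard_coe_finset] at hX2
  have hQ3 : Q.card = 3 ∧ X.card = 3 := by
    have : Q.card ≤ 4 := by nlinarith
    have : X.card ≤ 4 := by nlinarith
    generalize Q.card = q at *
    generalize X.card = n at *
    interval_cases q <;> omega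
  exact no_block_system ρ inv (fun m => (hinv m).1) comm heven i a b c hca.symm O2 hcard
    ((mO2 b).2 (refl' b)) haO hcO cover orb stab far mova Q
    (fun B hB => (hsz B hB).trans hQ3.2) hQ3.1 disj cov img
end

section
/- Let Γ = (G, (ρ_0, …, ρ_{r−1})) be an sggi on a finite set Ω such that G_0 = ⟨ρ_1, …, ρ_{r−1}⟩ is transitive on Ω and ρ_0 is an even permutation. Then at least one of the following holds: (1) G_{0,1} = ⟨ρ_2, …, ρ_{r−1}⟩ has an orbit of even size; (2) G_{0,1} has at least four orbits of odd size. -/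
/-!
Write `h = ρ_0` and `H = G_{0,1}`. The string condition says that `h` centralizes `H`, so `h`
permutes the `H`-orbits. Suppose that all `H`-orbits have odd size. An `H`-orbit mapped to itself
by `h` is fixed pointwise (`fixed_of_mem_orbit`): the involution `h` has a fixed point on a set of
odd size, and commuting with the transitive action of `H` spreads it over the whole orbit. Hence
the support of `h` is a union of orbits that `h` swaps in pairs. As `h` is even, `4` divides the
size of its support (`four_dvd_card_support`), whereas one pair of swapped orbits has size twice an
odd number. As `h ≠ 1`, there are therefore at least two pairs, that is, four odd orbits.
-/

open Equiv

/-- The orbit of `x` under the subgroup `H` of `Perm Ω`. -/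
def OrbitOf {Ω : Type*} (H : Subgroup (Perm Ω)) (x : Ω) : Set Ω :=
  {y | SameOrbit H x y}

/-- The cycle type of an involution `h` consists of 2-cycles only, and their number is even when `h`
is an even permutation. -/
theorem four_dvd_card_support {Ω : Type*} [Fintype Ω] [DecidableEq Ω] {h : Perm Ω}
    (h2 : h * h = 1) (hs : Perm.sign h = 1) : 4 ∣ h.support.card := by
  have hc : h.cycleType = Multiset.replicate h.cycleType.card 2 :=
    Perm.cycleType_of_pow_prime_eq_one (by rw [pow_two, h2])
  have hsum : h.cycleType.sum = h.cycleType.card * 2 := by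
    conv_lhs => rw [hc]
    simp
  rw [Perm.sign_of_cycleType, hsum, neg_one_pow_eq_one_iff_even (by decide)] at hs
  rw [← Perm.sum_cycleType, hsum]
  obtain ⟨k, hk⟩ := hs
  omega

/-- An involution centralizing `H` fixes pointwise every odd `H`-orbit that it maps to itself: it has
a fixed point `k x` in the orbit of `x`, with `k ∈ H`, and commutes with `k`. -/
theorem fixed_of_mem_orbit {Ω : Type*} [Fintype Ω] {h : Perm Ω} (h2 : h * h = 1)
    {H : Subgroup (Perm Ω)} (hcomm : ∀ g ∈ H, ∀ x, h (g x) = g (h x)) {x : Ω}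
    (hodd : Odd (OrbitOf H x).ncard) (hx : SameOrbit H x (h x)) : h x = x := by
  classical
  have hh : ∀ y, h (h y) = y := fun y => by rw [← Perm.mul_apply, h2, Perm.one_apply]
  obtain ⟨g, hg, hgx⟩ := hx
  have hmap : ∀ y, y ∈ OrbitOf H x → h y ∈ OrbitOf H x := by
    rintro y ⟨k, hk, rfl⟩
    exact ⟨k * g, H.mul_mem hk hg, by rw [hcomm k hk, Perm.mul_apply, hgx]⟩
  let σ : Perm {y // y ∈ OrbitOf H x} :=
    h.subtypePerm fun y => ⟨fun hy => by simpa [hh] using hmap _ hy, hmap y⟩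
  have hσ : σ ^ 2 ^ 1 = 1 := by
    ext y
    simp [σ, pow_two, hh]
  have hnd : ¬ 2 ∣ Fintype.card {y // y ∈ OrbitOf H x} := by
    rw [← Nat.card_eq_fintype_card]
    exact hodd.not_two_dvd_nat
  obtain ⟨⟨y, k, hk, rfl⟩, hy⟩ := Perm.exists_fixed_point_of_prime hnd hσ
  have hy' : h (k x) = k x := congrArg Subtype.val hy
  rw [hcomm k hk] at hy'
  exact k.injective hy'

theorem ncard_orbit_apply {Ω : Type*} {h : Perm Ω} {H : Subgroup (Perm Ω)}
    (hcomm : ∀ g ∈ H, ∀ x, h (g x) = g (h x)) (x : Ω) :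
    (OrbitOf H (h x)).ncard = (OrbitOf H x).ncard := by
  have : OrbitOf H (h x) = h '' OrbitOf H x := by
    ext y
    constructor
    · rintro ⟨g, hg, rfl⟩
      exact ⟨g x, ⟨g, hg, rfl⟩, hcomm g hg x⟩
    · rintro ⟨_, ⟨g, hg, rfl⟩, rfl⟩
      exact ⟨g, hg, (hcomm g hg x).symm⟩
  rw [this, Set.ncard_image_of_injective _ h.injective]

/-- If `Γ` is an sggi on a finite set `Ω` with
`G_0 = ⟨ρ_1, …, ρ_{r-1}⟩` transitive and `ρ_0` even, then either
`G_{0,1} = ⟨ρ_2, …, ρ_{r-1}⟩` has an orbit of even size, or it has at least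
four orbits of odd size. -/
theorem statement14 {Ω : Type*} [Fintype Ω] [DecidableEq Ω] {r : ℕ} (hr : 1 ≤ r)
    (ρ : Fin r → Perm Ω) (hsggi : Sggi ρ)
    (htrans : ∀ x y : Ω, ∃ g ∈ Subgroup.closure (ρ '' {j | 1 ≤ (j : ℕ)}), g x = y)
    (heven : Perm.sign (ρ ⟨0, by omega⟩) = 1) :
    (∃ x : Ω, Even (OrbitOf (Subgroup.closure (ρ '' {j | 2 ≤ (j : ℕ)})) x).ncard) ∨
    (∃ x₁ x₂ x₃ x₄ : Ω,
      (¬ SameOrbit (Subgroup.closure (ρ '' {j | 2 ≤ (j : ℕ)})) x₁ x₂) ∧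
      (¬ SameOrbit (Subgroup.closure (ρ '' {j | 2 ≤ (j : ℕ)})) x₁ x₃) ∧
      (¬ SameOrbit (Subgroup.closure (ρ '' {j | 2 ≤ (j : ℕ)})) x₁ x₄) ∧
      (¬ SameOrbit (Subgroup.closure (ρ '' {j | 2 ≤ (j : ℕ)})) x₂ x₃) ∧
      (¬ SameOrbit (Subgroup.closure (ρ '' {j | 2 ≤ (j : ℕ)})) x₂ x₄) ∧
      (¬ SameOrbit (Subgroup.closure (ρ '' {j | 2 ≤ (j : ℕ)})) x₃ x₄) ∧
      Odd (OrbitOf (Subgroup.closure (ρ '' {j | 2 ≤ (j : ℕ)})) x₁).ncard ∧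
      Odd (OrbitOf (Subgroup.closure (ρ '' {j | 2 ≤ (j : ℕ)})) x₂).ncard ∧
      Odd (OrbitOf (Subgroup.closure (ρ '' {j | 2 ≤ (j : ℕ)})) x₃).ncard ∧
      Odd (OrbitOf (Subgroup.closure (ρ '' {j | 2 ≤ (j : ℕ)})) x₄).ncard) := by
  classical
  set H := Subgroup.closure (ρ '' {j | 2 ≤ (j : ℕ)}) with hH
  set h := ρ ⟨0, by omega⟩ with hh
  obtain ⟨hinv, hstr⟩ := hsggi
  obtain ⟨hne, h2⟩ : IsInvolution h := hinv _
  have hcent : ∀ g ∈ H, h * g = g * h := by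
    have hle : H ≤ Subgroup.centralizer {h} := by
      rw [hH, Subgroup.closure_le]
      rintro _ ⟨j, hj, rfl⟩
      rw [SetLike.mem_coe, Subgroup.mem_centralizer_singleton_iff]
      have hj2 : ρ j * ρ j = 1 := (hinv j).2
      have hc : (h * ρ j) * (h * ρ j) = 1 := hstr _ j (Or.inl hj)
      -- all three of `h`, `ρ j`, `h * ρ j` are their own inverses
      calc ρ j * h = (h * ρ j)⁻¹ := by
            rw [mul_inv_rev, inv_eq_of_mul_eq_one_right h2, inv_eq_of_mul_eq_one_right hj2]
        _ = h * ρ j := inv_eq_of_mul_eq_one_right hc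
    intro g hg
    exact (Subgroup.mem_centralizer_singleton_iff.mp (hle hg)).symm
  have hcomm : ∀ g ∈ H, ∀ x, h (g x) = g (h x) := fun g hg x => by
    rw [← Perm.mul_apply, hcent g hg, Perm.mul_apply]
  have hhh : ∀ y, h (h y) = y := fun y => by rw [← Perm.mul_apply, h2, Perm.one_apply]
  by_cases hev : ∃ x : Ω, Even (OrbitOf H x).ncard
  · exact Or.inl hev
  right
  have hodd : ∀ x, Odd (OrbitOf H x).ncard := fun x =>
    Nat.not_even_iff_odd.mp fun he => hev ⟨x, he⟩
  have hmoved : ∀ x, h x ≠ x → ¬ SameOrbit H x (h x) := fun x hx hs =>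
    hx (fixed_of_mem_orbit h2 hcomm (hodd x) hs)
  obtain ⟨x, hx⟩ : ∃ x, h x ≠ x := by
    by_contra! hall
    exact hne (Perm.ext hall)
  -- a moved point outside the two swapped orbits of `x` and `h x`
  obtain ⟨y, hy, hyA, hyB⟩ : ∃ y, h y ≠ y ∧ ¬ SameOrbit H x y ∧ ¬ SameOrbit H (h x) y := by
    by_contra! hall
    have hsupp : (h.support : Set Ω) = OrbitOf H x ∪ OrbitOf H (h x) := by
      ext y
      rw [Finset.mem_coe, Perm.mem_support]
      constructor
      · intro hy
        by_cases hA : SameOrbit H x y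
        · exact Or.inl hA
        · exact Or.inr (hall y hy hA)
      · rintro (⟨g, hg, rfl⟩ | ⟨g, hg, rfl⟩) hfix
        · rw [hcomm g hg] at hfix
          exact hx (g.injective hfix)
        · rw [hcomm g hg] at hfix
          exact hx (h.injective (g.injective hfix))
    have hdisj : Disjoint (OrbitOf H x) (OrbitOf H (h x)) := by
      rw [Set.disjoint_left]
      rintro y ⟨g, hg, rfl⟩ ⟨k, hk, hkg⟩
      refine hmoved x hx ⟨k⁻¹ * g, H.mul_mem (H.inv_mem hk) hg, ?_⟩
      rw [Perm.mul_apply, Perm.inv_eq_iff_eq, hkg]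
    have hcard := congrArg Set.ncard hsupp
    rw [Set.ncard_coe_finset, Set.ncard_union_eq hdisj, ncard_orbit_apply hcomm] at hcard
    -- `4` divides `2 * (2 * m + 1)`, which is absurd
    have h4 := four_dvd_card_support h2 heven
    obtain ⟨m, hm⟩ := hodd x
    omega
  refine ⟨x, h x, y, h y, hmoved x hx, hyA, ?_, hyB, ?_, hmoved y hy,
    hodd _, hodd _, hodd _, hodd _⟩
  · rintro ⟨g, hg, hgx⟩
    exact hyB ⟨g, hg, by rw [← hcomm g hg, hgx, hhh]⟩
  · rintro ⟨g, hg, hgx⟩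
    exact hyA ⟨g, hg, h.injective (by rw [hcomm g hg, hgx])⟩
end

section
/- Let Γ = (G, (ρ_0, …, ρ_{r−1})) be an sggi on a finite set Ω. Suppose that for every pair of distinct orbits U, V of G_{0,1} = ⟨ρ_2, …, ρ_{r−1}⟩ there is no bijection f : U → V satisfying f(ρ_j(u)) = ρ_j(f(u)) for all u ∈ U and all j ∈ {2, …, r−1} (i.e., the labelled subgraphs induced on the G_{0,1}-orbits are pairwise non-isomorphic). Then ρ_0 acts non-trivially only on G_{0,1}-orbits of even size: every G_{0,1}-orbit of odd size is fixed pointwise by ρ_0. -/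
/-!
Write `H` for the subgroup generated by the `ρ j` with `2 ≤ j`. Since `ρ 0` is an involution
commuting with each of these generators, it centralizes `H`, and therefore restricts to a
label-preserving bijection from the `H`-orbit of `x` onto the `H`-orbit of `ρ 0 x`. As distinct
orbits are non-isomorphic, these two orbits coincide, so `ρ 0` is an involution of the orbit of `x`.
If the orbit has odd size this involution has a fixed point `z`
(`exists_fixed_of_odd_ncard`). Every other point of the orbit is `g z` for some `g ∈ H`, and
`ρ 0 (g z) = g (ρ 0 z) = g z`.
-/

open Equiv

lemma sameOrbit_symm {Ω : Type*} {H : Subgroup (Perm Ω)} {a b : Ω} (h : SameOrbit H a b) :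
    SameOrbit H b a := by
  obtain ⟨g, hg, rfl⟩ := h
  exact ⟨g⁻¹, H.inv_mem hg, by simp⟩

lemma sameOrbit_trans {Ω : Type*} {H : Subgroup (Perm Ω)} {a b c : Ω} (h : SameOrbit H a b)
    (h' : SameOrbit H b c) : SameOrbit H a c := by
  obtain ⟨g, hg, rfl⟩ := h
  obtain ⟨k, hk, rfl⟩ := h'
  exact ⟨k * g, H.mul_mem hk hg, rfl⟩

/-- An involution of a finite set of odd size has a fixed point: without one, the constant
function `1` with values in `ZMod 2` would sum to zero over the set. -/
lemma exists_fixed_of_odd_ncard {Ω : Type*} [Finite Ω] (S : Set Ω) (f : Ω → Ω)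
    (hf : ∀ a, f (f a) = a) (hS : ∀ a ∈ S, f a ∈ S) (hodd : Odd S.ncard) :
    ∃ z ∈ S, f z = z := by
  classical
  by_contra! hne
  have hfin : S.Finite := S.toFinite
  have hsum : ∑ _a ∈ hfin.toFinset, (1 : ZMod 2) = 0 :=
    Finset.sum_involution (fun a _ => f a) (fun _ _ => by decide)
      (fun a ha _ => hne a (by simpa using ha)) (fun a ha => by simpa using hS a (by simpa using ha))
      (fun a _ => hf a)
  rw [Finset.sum_const, nsmul_one, ZMod.natCast_eq_zero_iff_even,
    ← Set.ncard_eq_toFinset_card S hfin] at hsum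
  exact Nat.not_even_iff_odd.mpr hodd hsum

/-- A permutation centralizing `H` maps each `H`-orbit bijectively onto an `H`-orbit. -/
lemma bijOn_orbitOf {Ω : Type*} {H : Subgroup (Perm Ω)} {s : Perm Ω}
    (hs : ∀ g ∈ H, ∀ a, s (g a) = g (s a)) (x : Ω) :
    Set.BijOn s (OrbitOf H x) (OrbitOf H (s x)) := by
  refine ⟨?_, s.injective.injOn, ?_⟩
  · rintro _ ⟨g, hg, rfl⟩
    exact ⟨g, hg, (hs g hg x).symm⟩
  · rintro _ ⟨g, hg, rfl⟩
    exact ⟨g x, ⟨g, hg, rfl⟩, hs g hg x⟩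

/-- If the labelled subgraphs induced on the distinct
`G_{0,1}`-orbits are pairwise non-isomorphic (no label-preserving bijection
between distinct orbits), then `ρ_0` fixes every `G_{0,1}`-orbit of odd size
pointwise. -/
theorem statement15 {Ω : Type*} [Fintype Ω] [DecidableEq Ω] {r : ℕ} (hr : 1 ≤ r)
    (ρ : Fin r → Perm Ω) (hsggi : Sggi ρ)
    (hnoniso : ∀ u v : Ω,
      ¬ SameOrbit (Subgroup.closure (ρ '' {j | 2 ≤ (j : ℕ)})) u v →
      ¬ ∃ f : Ω → Ω,
        Set.BijOn f (OrbitOf (Subgroup.closure (ρ '' {j | 2 ≤ (j : ℕ)})) u)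
          (OrbitOf (Subgroup.closure (ρ '' {j | 2 ≤ (j : ℕ)})) v) ∧
        ∀ x ∈ OrbitOf (Subgroup.closure (ρ '' {j | 2 ≤ (j : ℕ)})) u,
          ∀ j : Fin r, 2 ≤ (j : ℕ) → f (ρ j x) = ρ j (f x)) :
    ∀ x : Ω, Odd (OrbitOf (Subgroup.closure (ρ '' {j | 2 ≤ (j : ℕ)})) x).ncard →
      ∀ y ∈ OrbitOf (Subgroup.closure (ρ '' {j | 2 ≤ (j : ℕ)})) x,
        ρ ⟨0, by omega⟩ y = y := by
  set H := Subgroup.closure (ρ '' {j | 2 ≤ (j : ℕ)}) with hH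
  set s : Perm Ω := ρ ⟨0, by omega⟩ with hs
  have hss : s * s = 1 := (hsggi.1 _).2
  have hinv : ∀ a, s (s a) = a := fun a => by
    simpa using congrArg (fun p : Perm Ω => p a) hss
  have hgen : ∀ j : Fin r, 2 ≤ (j : ℕ) → Commute s (ρ j) := by
    intro j hj
    have h1 : (s * ρ j) * (s * ρ j) = 1 := hsggi.2 _ j (Or.inl (by simp; omega))
    have h2 : ρ j * ρ j = 1 := (hsggi.1 j).2
    -- An involution is its own inverse, so inverting `s * ρ j` swaps its factors.
    have h3 := eq_inv_of_mul_eq_one_left h1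
    rwa [mul_inv_rev, ← eq_inv_of_mul_eq_one_left h2, ← eq_inv_of_mul_eq_one_left hss] at h3
  have hle : H ≤ Subgroup.centralizer {s} := by
    rw [hH, Subgroup.closure_le]
    rintro _ ⟨j, hj, rfl⟩
    exact Subgroup.mem_centralizer_singleton_iff.mpr (hgen j hj).symm
  have hcomm : ∀ g ∈ H, ∀ a, s (g a) = g (s a) := by
    intro g hg a
    have h := Subgroup.mem_centralizer_singleton_iff.mp (hle hg)
    exact (congrArg (fun p : Perm Ω => p a) h).symm
  intro x hodd y hy
  have hx : SameOrbit H x (s x) := by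
    by_contra hno
    exact hnoniso x (s x) hno ⟨s, bijOn_orbitOf hcomm x, fun a _ j hj =>
      congrArg (fun p : Perm Ω => p a) (hgen j hj)⟩
  obtain ⟨z, hz, hfix⟩ := exists_fixed_of_odd_ncard (OrbitOf H x) s hinv
    (fun a ha => sameOrbit_trans hx ((bijOn_orbitOf hcomm x).mapsTo ha)) hodd
  obtain ⟨g, hg, rfl⟩ := sameOrbit_trans (sameOrbit_symm hz) hy
  rw [hcomm g hg, hfix]
end

section
/- Let Γ = (G, (ρ_0, …, ρ_{r−1})) be an sggi on a finite set Ω whose permutation representation graph has a fracture graph. If ρ_i is a 2-transposition (it moves exactly 4 points) and there is a double {i,j}-edge for some j ≠ i (distinct points a, b with ρ_i(a) = b and ρ_j(a) = b), then Γ has an i-split. -/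
/-!
The double `{i,j}`-edge `{a, b}` has both endpoints in one `G_i`-orbit, since `ρ j ∈ G_i` swaps
them. As `ρ i` moves only four points, it has exactly one `i`-edge besides `{a, b}`, and the edge
`{c, ρ i c}` supplied by the fracture graph must be that one; hence it is the unique `i`-edge joining
different `G_i`-orbits.
-/

open Equiv

/-- In an sggi on a finite set with a fracture graph, if
`ρ_i` is a 2-transposition (moves exactly 4 points) and there is a double
`{i,j}`-edge for some `j ≠ i`, then there is an `i`-split. -/
theorem statement16 {Ω : Type*} [Fintype Ω] [DecidableEq Ω] {r : ℕ}
    (ρ : Fin r → Perm Ω) (hsggi : Sggi ρ) (hfrac : HasFractureGraph ρ)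
    (i j : Fin r) (hij : j ≠ i)
    (hsupp : (ρ i).support.card = 4)
    (hdouble : ∃ a b : Ω, a ≠ b ∧ ρ i a = b ∧ ρ j a = b) :
    ∃ a b : Ω, IsSplit ρ i a b := by
  obtain ⟨a, b, hab, hia, hja⟩ := hdouble
  obtain ⟨c, hc, hco⟩ := hfrac i
  have hinv : ∀ k x, ρ k (ρ k x) = x := fun k x => by
    rw [← Perm.mul_apply, (hsggi.1 k).2, Perm.one_apply]
  have hib : ρ i b = a := by rw [← hia, hinv]
  have hjb : ρ j b = a := by rw [← hja, hinv]
  have hj : ρ j ∈ Gi ρ i := Subgroup.subset_closure ⟨j, hij, rfl⟩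
  have ha : SameOrbit (Gi ρ i) a (ρ i a) := ⟨ρ j, hj, hja.trans hia.symm⟩
  have hb : SameOrbit (Gi ρ i) b (ρ i b) := ⟨ρ j, hj, hjb.trans hib.symm⟩
  have hca : c ≠ a := fun h => hco (h ▸ ha)
  have hcb : c ≠ b := fun h => hco (h ▸ hb)
  have hda : ρ i c ≠ a := fun h => hcb (by rw [← hinv i c, h, hia])
  have hdb : ρ i c ≠ b := fun h => hca (by rw [← hinv i c, h, hib])
  have hsub : ({a, b, c, ρ i c} : Finset Ω) ⊆ (ρ i).support := by
    intro x hx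
    simp only [Finset.mem_insert, Finset.mem_singleton] at hx
    rw [Perm.mem_support]
    rcases hx with rfl | rfl | rfl | rfl
    · exact hia ▸ hab.symm
    · exact hib ▸ hab
    · exact hc
    · rw [hinv]
      exact hc.symm
  have hcard : ({a, b, c, ρ i c} : Finset Ω).card = 4 := by
    rw [Finset.card_insert_of_notMem, Finset.card_insert_of_notMem, Finset.card_pair hc.symm]
    · simp [hcb.symm, hdb.symm]
    · simp [hab, hca.symm, hda.symm]
  have hsupport := Finset.eq_of_subset_of_card_le hsub (by rw [hcard, hsupp])
  refine ⟨c, ρ i c, rfl, hc.symm, hco, fun e he heo => ?_⟩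
  have hmem : e ∈ ({a, b, c, ρ i c} : Finset Ω) := hsupport ▸ Perm.mem_support.2 he
  simp only [Finset.mem_insert, Finset.mem_singleton] at hmem
  rcases hmem with rfl | rfl | h | h
  · exact absurd ha heo
  · exact absurd hb heo
  · exact Or.inl h
  · exact Or.inr h
end

section
/- Let Γ = (G, (ρ_0, ρ_1, ρ_2, ρ_3)) be an even sggi of rank 4 on a finite set Ω. Suppose D is an orbit of G_{0,3} = ⟨ρ_1, ρ_2⟩ with |D| ≥ 4, X is the G_0-orbit containing D, and Y is the G_3-orbit containing D. Assume: (a) the action of G_0 on X is primitive and there exists α ∈ G_0 that is a 3-cycle whose support is contained in X (α fixes the complement of X pointwise); (b) the action of G_3 on Y is primitive and there exists β ∈ G_3 that is a 3-cycle whose support is contained in Y. Then Γ is not a string C-group; in fact G_0 ∩ G_3 ≠ G_{0,3}. -/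
/-!
The two groups `G_0 = ⟨ρ 1, ρ 2, ρ 3⟩` and `G_3 = ⟨ρ 0, ρ 1, ρ 2⟩` are large, while
`G_{0,3} = ⟨ρ 1, ρ 2⟩` is dihedral, hence small.

By Jordan's theorem, the group induced by `G_0` on `X` contains `Alt(X)`. The given 3-cycle fixes
every point outside `X`, and so do its conjugates in `G_0`; conjugating it by elements of `G_0`
inducing suitable even permutations of `X` shows that `G_0` contains *every* 3-cycle
supported in `X` (`swap_mul_swap_mem`). The same holds for `G_3` and `Y`. Hence every 3-cycle
supported in `D ⊆ X ∩ Y` lies in `G_0 ∩ G_3`.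

In a group generated by two involutions `u`, `v`, every square is a power of `u * v`
(`mul_self_mem_zpowers`), so squares commute with each other. For distinct points `a, b, c, e` of
`D`, the squares of the 3-cycles `swap a b * swap a c` and `swap a b * swap a e` do not commute.
So these 3-cycles cannot both lie in `G_{0,3}`.
-/

open Equiv

theorem orbitOf_eq_orbit {Ω : Type*} (H : Subgroup (Perm Ω)) (d : Ω) :
    OrbitOf H d = MulAction.orbit H d := by
  ext y
  constructor
  · rintro ⟨g, hg, rfl⟩
    exact ⟨⟨g, hg⟩, rfl⟩
  · rintro ⟨g, rfl⟩
    exact ⟨g.1, g.2, rfl⟩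

open scoped Pointwise in
/-- The elementary notion of primitivity on an orbit implies Mathlib's primitivity: the translates
of a nontrivial block would form a forbidden partition. -/
theorem isPreprimitive_orbit {Ω : Type*} [Finite Ω] {H : Subgroup (Perm Ω)} {d : Ω}
    (h : PrimitiveOn H (OrbitOf H d)) :
    MulAction.IsPreprimitive H (MulAction.orbit H d) := by
  refine { isTrivialBlock_of_isBlock := ?_ }
  intro B hB
  by_contra hnt
  rw [MulAction.IsTrivialBlock, not_or] at hnt
  obtain ⟨hns, hnu⟩ := hnt
  rw [Set.not_subsingleton_iff] at hns
  apply h.2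
  rw [orbitOf_eq_orbit]
  have hmem : ∀ x : MulAction.orbit H d, ∃ g : H, x ∈ g • B := by
    intro x
    obtain ⟨y, hy⟩ := hns.nonempty
    obtain ⟨g, rfl⟩ := MulAction.exists_smul_eq H y x
    exact ⟨g, Set.smul_mem_smul_set hy⟩
  refine ⟨Set.range fun g : H ↦ (Subtype.val '' (g • B) : Set Ω), ?_, ?_, ?_, ?_, ?_⟩
  · rintro _ ⟨g, rfl⟩
    refine ⟨by rintro _ ⟨x, -, rfl⟩; exact x.2, ?_⟩
    have h2 : (g • B).Nontrivial := by
      rw [← Set.image_smul]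
      exact hns.image (MulAction.injective g)
    exact (Set.one_lt_ncard_iff_nontrivial).2 (h2.image Subtype.val_injective)
  · ext x
    constructor
    · rintro ⟨_, ⟨g, rfl⟩, y, -, rfl⟩
      exact y.2
    · intro hx
      obtain ⟨g, hg⟩ := hmem ⟨x, hx⟩
      exact ⟨_, ⟨g, rfl⟩, _, hg, rfl⟩
  · rintro _ ⟨g₁, rfl⟩ _ ⟨g₂, rfl⟩ hne
    refine (Set.disjoint_image_iff Subtype.val_injective).2 (hB ?_)
    intro he
    exact hne (by simp only [he])
  · -- a point outside `B` lies in a translate of `B` different from `B`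
    obtain ⟨x, hx⟩ := (Set.ne_univ_iff_exists_notMem B).1 hnu
    obtain ⟨g, hg⟩ := hmem x
    refine (Set.one_lt_ncard_iff_nontrivial).2 ⟨_, ⟨1, rfl⟩, _, ⟨g, rfl⟩, ?_⟩
    intro he
    have he' := Subtype.val_injective.image_injective he
    rw [one_smul] at he'
    exact hx (he' ▸ hg)
  · rintro g hg _ ⟨k, rfl⟩
    refine ⟨⟨g, hg⟩ * k, ?_⟩
    ext x
    simp only [mul_smul, Set.mem_image, Set.mem_smul_set]
    constructor
    · rintro ⟨_, ⟨y, hy, rfl⟩, rfl⟩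
      exact ⟨_, ⟨y, hy, rfl⟩, rfl⟩
    · rintro ⟨_, ⟨y, hy, rfl⟩, rfl⟩
      exact ⟨_, ⟨y, hy, rfl⟩, rfl⟩

/-- If the action on an orbit is primitive and some 3-cycle is supported in the orbit, then every
3-cycle supported in the orbit belongs to the group. -/
theorem swap_mul_swap_mem {Ω : Type*} [Fintype Ω] [DecidableEq Ω] {H : Subgroup (Perm Ω)} {d : Ω}
    (h : PrimitiveOn H (OrbitOf H d))
    (hα : ∃ α ∈ H, Perm.IsThreeCycle α ∧ ↑α.support ⊆ OrbitOf H d)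
    {a b c : Ω} (ha : a ∈ OrbitOf H d) (hb : b ∈ OrbitOf H d) (hc : c ∈ OrbitOf H d)
    (hab : a ≠ b) (hac : a ≠ c) (hbc : b ≠ c) : swap a b * swap a c ∈ H := by
  classical
  obtain ⟨α, hαH, hα3, hαs⟩ := hα
  have hprim := isPreprimitive_orbit h
  rw [orbitOf_eq_orbit] at ha hb hc hαs
  set O := MulAction.orbit H d with hO
  have hinv : ∀ g ∈ H, ∀ x, g x ∈ O ↔ x ∈ O := fun g hg x ↦ by
    have : g x ∈ MulAction.orbit H x := ⟨⟨g, hg⟩, rfl⟩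
    rw [hO, ← MulAction.orbit_eq_iff, ← MulAction.orbit_eq_iff, MulAction.orbit_eq_iff.2 this]
  let α' : Perm O := α.subtypePerm (hinv α hαH)
  have hα' : Perm.ofSubtype α' = α :=
    Perm.ofSubtype_subtypePerm _ fun x hx ↦ hαs (by simpa using hx)
  have hα'3 : α'.IsThreeCycle := by
    rw [Perm.IsThreeCycle, ← Perm.cycleType_ofSubtype, hα']
    exact hα3
  let R : Subgroup (Perm O) := (MulAction.toPermHom H O).range
  have hR : MulAction.IsPreprimitive R O := by
    let f : O →ₑ[(MulAction.toPermHom H O).rangeRestrict] O := ⟨id, fun _ _ ↦ rfl⟩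
    exact MulAction.IsPreprimitive.of_surjective (f := f) Function.surjective_id
  have hAlt : alternatingGroup O ≤ R :=
    Perm.alternatingGroup_le_of_isPreprimitive_of_isThreeCycle_mem hR hα'3
      ⟨⟨α, hαH⟩, by ext x; rfl⟩
  -- conjugates of `α` by lifts of even permutations of the orbit
  have hconj : ∀ τ : Perm O, Perm.sign τ = 1 → Perm.ofSubtype (τ * α' * τ⁻¹) ∈ H := by
    intro τ hτ
    obtain ⟨g, rfl⟩ := hAlt (Perm.mem_alternatingGroup.2 hτ)
    have : Perm.ofSubtype (MulAction.toPermHom H O g * α' * (MulAction.toPermHom H O g)⁻¹)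
        = (g : Perm Ω) * α * (g : Perm Ω)⁻¹ := by
      ext x
      by_cases hx : x ∈ O
      · rw [Perm.ofSubtype_apply_of_mem _ hx, ← map_inv]
        rfl
      · rw [Perm.ofSubtype_apply_of_not_mem _ hx]
        have hx' : (g⁻¹ : Perm Ω) x ∉ O := by
          rwa [hinv _ (H.inv_mem g.2)]
        have hfix : α ((g⁻¹ : Perm Ω) x) = (g⁻¹ : Perm Ω) x := by
          by_contra hne
          exact hx' (hαs (by simpa using hne))
        rw [Perm.mul_apply, Perm.mul_apply, hfix, ← Perm.mul_apply, mul_inv_cancel, Perm.one_apply]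
    rw [this]
    exact H.mul_mem (H.mul_mem g.2 hαH) (H.inv_mem g.2)
  let a' : O := ⟨a, ha⟩
  let b' : O := ⟨b, hb⟩
  let c' : O := ⟨c, hc⟩
  have hab' : a' ≠ b' := fun e ↦ hab (congrArg Subtype.val e)
  have hac' : a' ≠ c' := fun e ↦ hac (congrArg Subtype.val e)
  have hbc' : b' ≠ c' := fun e ↦ hbc (congrArg Subtype.val e)
  have hσ : Perm.ofSubtype (swap a' b' * swap a' c') = swap a b * swap a c := by
    rw [map_mul, Perm.ofSubtype_swap_eq, Perm.ofSubtype_swap_eq]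
  obtain ⟨τ, hτ⟩ := isConj_iff.1 (Perm.isConj_iff_cycleType_eq.2
    (hα'3.cycleType.trans (Perm.isThreeCycle_swap_mul_swap_same hab' hac' hbc').cycleType.symm))
  rcases Int.units_eq_one_or (Perm.sign τ) with hs | hs
  · rw [← hσ, ← hτ]
    exact hconj τ hs
  · -- if `τ` is odd, `swap a' b' * τ` is even and conjugates `α'` to the inverse 3-cycle
    have hmem := hconj (swap a' b' * τ) (by rw [Perm.sign_mul, Perm.sign_swap hab', hs]; rfl)
    have heq : swap a' b' * τ * α' * (swap a' b' * τ)⁻¹ = (swap a' b' * swap a' c')⁻¹ := by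
      calc swap a' b' * τ * α' * (swap a' b' * τ)⁻¹
          = swap a' b' * (τ * α' * τ⁻¹) * (swap a' b')⁻¹ := by group
        _ = _ := by
          rw [hτ, mul_inv_rev, swap_inv, swap_inv, ← mul_assoc, swap_mul_self, one_mul]
    rw [heq, map_inv, hσ] at hmem
    exact H.inv_mem_iff.1 hmem

/-- In the dihedral group generated by two involutions, each element is a rotation, whose square is
a rotation, or a reflection, whose square is trivial. -/
theorem mul_self_mem_zpowers {G : Type*} [Group G] {u v g : G} (hu : u * u = 1) (hv : v * v = 1)
    (hg : g ∈ Subgroup.closure {u, v}) : g * g ∈ Subgroup.zpowers (u * v) := by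
  have hui : u⁻¹ = u := inv_eq_of_mul_eq_one_left hu
  have hvi : v⁻¹ = v := inv_eq_of_mul_eq_one_left hv
  have key : g ∈ Subgroup.zpowers (u * v) ∨ u * g ∈ Subgroup.zpowers (u * v) := by
    have step : ∀ x ∈ ({u, v} : Set G), ∀ y,
        (y ∈ Subgroup.zpowers (u * v) ∨ u * y ∈ Subgroup.zpowers (u * v)) →
        (x * y ∈ Subgroup.zpowers (u * v) ∨ u * (x * y) ∈ Subgroup.zpowers (u * v)) := by
      rintro x (rfl | rfl) y (hy | hy)
      · right; rwa [← mul_assoc, hu, one_mul]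
      · left; exact hy
      · right
        rw [← mul_assoc]
        exact Subgroup.mul_mem _ (Subgroup.mem_zpowers _) hy
      · left
        have : x * y = (u * x)⁻¹ * (u * y) := by
          rw [mul_inv_rev, hvi]; group
        rw [this]
        exact Subgroup.mul_mem _ (Subgroup.inv_mem _ (Subgroup.mem_zpowers _)) hy
    induction hg using Subgroup.closure_induction_left with
    | one => exact Or.inl (Subgroup.one_mem _)
    | mul_left x hx y _ ih => exact step x hx y ih
    | inv_mul_cancel x hx y _ ih =>
      have : x⁻¹ = x := by rcases hx with rfl | rfl <;> assumption
      rw [this]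
      exact step x hx y ih
  rcases key with h | h
  · exact Subgroup.mul_mem _ h h
  · obtain ⟨n, hn⟩ := h
    have hn : (u * v) ^ n = u * g := hn
    have hgn : g = u * (u * v) ^ n := by rw [hn, ← mul_assoc, hu, one_mul]
    have hc : u * (u * v) ^ n * u = ((u * v) ^ n)⁻¹ := by
      have : u * (u * v) * u⁻¹ = (u * v)⁻¹ := by
        rw [mul_inv_rev, hui, hvi, ← mul_assoc, hu, one_mul]
      have h2 := conj_zpow (i := n) (a := u) (b := u * v)
      rw [this, inv_zpow, hui] at h2
      exact h2.symm
    have : g * g = 1 := by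
      rw [hgn, ← mul_assoc, hc, inv_mul_cancel]
    rw [this]
    exact Subgroup.one_mem _

/-- Let `Γ` be an even sggi of rank 4 on a finite set, `D` an
orbit of `G_{0,3} = ⟨ρ_1, ρ_2⟩` with at least 4 points, `X` the `G_0`-orbit
containing `D`, `Y` the `G_3`-orbit containing `D`. If `G_0` is primitive on
`X` and contains a 3-cycle supported in `X`, and `G_3` is primitive on `Y` and
contains a 3-cycle supported in `Y`, then `Γ` is not a string C-group; in fact
`G_0 ∩ G_3 ≠ G_{0,3}`. -/
theorem statement17 {Ω : Type*} [Fintype Ω] [DecidableEq Ω]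
    (ρ : Fin 4 → Perm Ω) (hsggi : Sggi ρ)
    (heven : ∀ i, Perm.sign (ρ i) = 1)
    (d : Ω)
    (hD : 4 ≤ (OrbitOf (Subgroup.closure (ρ '' {j | j ≠ 0 ∧ j ≠ 3})) d).ncard)
    (hX : PrimitiveOn (Subgroup.closure (ρ '' {j | j ≠ 0}))
      (OrbitOf (Subgroup.closure (ρ '' {j | j ≠ 0})) d))
    (hα : ∃ α ∈ Subgroup.closure (ρ '' {j | j ≠ 0}), Perm.IsThreeCycle α ∧
      ↑α.support ⊆ OrbitOf (Subgroup.closure (ρ '' {j | j ≠ 0})) d)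
    (hY : PrimitiveOn (Subgroup.closure (ρ '' {j | j ≠ 3}))
      (OrbitOf (Subgroup.closure (ρ '' {j | j ≠ 3})) d))
    (hβ : ∃ β ∈ Subgroup.closure (ρ '' {j | j ≠ 3}), Perm.IsThreeCycle β ∧
      ↑β.support ⊆ OrbitOf (Subgroup.closure (ρ '' {j | j ≠ 3})) d) :
    ¬ IntersectionProperty ρ ∧
    Subgroup.closure (ρ '' {j | j ≠ 0}) ⊓ Subgroup.closure (ρ '' {j | j ≠ 3}) ≠
      Subgroup.closure (ρ '' {j | j ≠ 0 ∧ j ≠ 3}) := by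
  have hsets : ({j | j ≠ 0} ∩ {j | j ≠ 3} : Set (Fin 4)) = {j | j ≠ 0 ∧ j ≠ 3} := rfl
  suffices hne : Subgroup.closure (ρ '' {j | j ≠ 0}) ⊓ Subgroup.closure (ρ '' {j | j ≠ 3}) ≠
      Subgroup.closure (ρ '' {j | j ≠ 0 ∧ j ≠ 3}) by
    refine ⟨fun hI ↦ hne ?_, hne⟩
    rw [← hsets]
    exact hI _ _
  intro heq
  have hle0 : Subgroup.closure (ρ '' {j | j ≠ 0 ∧ j ≠ 3}) ≤ Subgroup.closure (ρ '' {j | j ≠ 0}) :=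
    heq ▸ inf_le_left
  have hle3 : Subgroup.closure (ρ '' {j | j ≠ 0 ∧ j ≠ 3}) ≤ Subgroup.closure (ρ '' {j | j ≠ 3}) :=
    heq ▸ inf_le_right
  have h12 : ρ '' {j | j ≠ 0 ∧ j ≠ 3} = {ρ 1, ρ 2} := by
    have : ({j | j ≠ 0 ∧ j ≠ 3} : Set (Fin 4)) = {1, 2} := by
      ext j
      fin_cases j <;> simp
    rw [this, Set.image_pair]
  set D := OrbitOf (Subgroup.closure (ρ '' {j | j ≠ 0 ∧ j ≠ 3})) d with hDdef
  have hDX : ∀ x ∈ D, x ∈ OrbitOf (Subgroup.closure (ρ '' {j | j ≠ 0})) d :=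
    fun x ⟨g, hg, hx⟩ ↦ ⟨g, hle0 hg, hx⟩
  have hDY : ∀ x ∈ D, x ∈ OrbitOf (Subgroup.closure (ρ '' {j | j ≠ 3})) d :=
    fun x ⟨g, hg, hx⟩ ↦ ⟨g, hle3 hg, hx⟩
  have hcyc : ∀ a ∈ D, ∀ b ∈ D, ∀ c ∈ D, a ≠ b → a ≠ c → b ≠ c →
      swap a b * swap a c ∈ Subgroup.closure {ρ 1, ρ 2} := by
    intro a ha b hb c hc hab hac hbc
    rw [← h12, ← heq]
    exact ⟨swap_mul_swap_mem hX hα (hDX a ha) (hDX b hb) (hDX c hc) hab hac hbc,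
      swap_mul_swap_mem hY hβ (hDY a ha) (hDY b hb) (hDY c hc) hab hac hbc⟩
  obtain ⟨a, ha, b, hb, c, hc, hab, hac, hbc⟩ := (Set.two_lt_ncard (s := D)).1 (by omega)
  obtain ⟨e, he, hne⟩ := Set.exists_mem_notMem_of_ncard_lt_ncard (s := {a, b, c}) (t := D)
    ((Set.ncard_insert_le _ _).trans_lt (by rw [Set.ncard_pair hbc]; omega))
  simp only [Set.mem_insert_iff, Set.mem_singleton_iff, not_or] at hne
  obtain ⟨hea, heb, hec⟩ := hne
  obtain ⟨m, hm⟩ := mul_self_mem_zpowers (hsggi.1 1).2 (hsggi.1 2).2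
    (hcyc a ha b hb c hc hab hac hbc)
  obtain ⟨n, hn⟩ := mul_self_mem_zpowers (hsggi.1 1).2 (hsggi.1 2).2
    (hcyc a ha b hb e he hab (Ne.symm hea) (Ne.symm heb))
  have hcomm := (Commute.refl (ρ 1 * ρ 2)).zpow_zpow m n
  simp only at hm hn
  rw [hm, hn] at hcomm
  -- the two products of squares send `e` to `b` and to `a`, respectively
  have happ := Perm.congr_fun hcomm.eq e
  simp only [Perm.mul_apply] at happ
  grind
end

section
/- Consider the following four permutations of the set {1, 2, …, 11}: ρ_0 = (2 3)(4 5), ρ_1 = (1 2)(3 4)(5 6)(9 10), ρ_2 = (4 5)(6 7)(8 9)(10 11), ρ_3 = (7 8)(9 10). Then (⟨ρ_0,ρ_1,ρ_2,ρ_3⟩, (ρ_0,ρ_1,ρ_2,ρ_3)) is an sggi whose group is the alternating group A₁₁ on the 11 points, but it is not a string C-group: the intersection property fails, namely ⟨ρ_1, ρ_2, ρ_3⟩ ∩ ⟨ρ_0, ρ_1, ρ_2⟩ ≠ ⟨ρ_1, ρ_2⟩. -/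
/-!
Every generator is a product of an even number of transpositions, so the group `G` they generate
lies in `A₁₁`. Conversely `G` is transitive on `11` points, hence primitive because `11` is prime,
and `(ρ₀ρ₁ρ₂)⁴` is a 3-cycle, since `ρ₀ρ₁ρ₂` has cycle type `4, 4, 3`; Jordan's theorem then gives
`A₁₁ ≤ G`.

For the intersection property, the double transposition `h = (3 6)(5 7)` (on the points `1, …, 11`)
is a conjugate of `ρ₀` in `⟨ρ₀, ρ₁, ρ₂⟩` and a conjugate of `ρ₃` in `⟨ρ₁, ρ₂, ρ₃⟩`. The group
`⟨ρ₁, ρ₂⟩` is dihedral, so each of its elements conjugates `ρ₁ρ₂` to itself or to its inverse,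
which `h` does not do.
-/

open Equiv

/-- The four permutations of `{1, …, 11}` from graph (A1), re-indexed so that
the point `k : Fin 11` represents the point `k + 1`:
`ρ₀ = (2 3)(4 5)`, `ρ₁ = (1 2)(3 4)(5 6)(9 10)`,
`ρ₂ = (4 5)(6 7)(8 9)(10 11)`, `ρ₃ = (7 8)(9 10)`. -/
def a1Gens : Fin 4 → Perm (Fin 11) :=
  ![Equiv.swap 1 2 * Equiv.swap 3 4,
    Equiv.swap 0 1 * Equiv.swap 2 3 * Equiv.swap 4 5 * Equiv.swap 8 9,
    Equiv.swap 3 4 * Equiv.swap 5 6 * Equiv.swap 7 8 * Equiv.swap 9 10,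
    Equiv.swap 6 7 * Equiv.swap 8 9]

theorem a1Gens_sggi : Sggi a1Gens := by
  unfold Sggi IsInvolution StringCommuting
  decide

theorem a1Gens_mem (i : Fin 4) : a1Gens i ∈ Subgroup.closure (Set.range a1Gens) :=
  Subgroup.subset_closure ⟨i, rfl⟩

theorem a1Gens_le_alternating :
    Subgroup.closure (Set.range a1Gens) ≤ alternatingGroup (Fin 11) := by
  rw [Subgroup.closure_le]
  rintro _ ⟨i, rfl⟩
  rw [SetLike.mem_coe, Perm.mem_alternatingGroup]
  fin_cases i <;> simp [a1Gens]

theorem a1Gens_pretransitive :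
    MulAction.IsPretransitive (Subgroup.closure (Set.range a1Gens)) (Fin 11) := by
  rw [MulAction.isPretransitive_iff_base (0 : Fin 11)]
  have step : ∀ (i : Fin 4) (x y : Fin 11), a1Gens i x = y →
      (∃ g : Subgroup.closure (Set.range a1Gens), g • (0 : Fin 11) = x) →
      ∃ g : Subgroup.closure (Set.range a1Gens), g • (0 : Fin 11) = y := by
    rintro i x y rfl ⟨g, rfl⟩
    exact ⟨⟨a1Gens i, a1Gens_mem i⟩ * g, mul_smul _ _ _⟩
  have h0 : ∃ g : Subgroup.closure (Set.range a1Gens), g • (0 : Fin 11) = 0 := ⟨1, one_smul _ _⟩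
  have h1 := step 1 0 1 (by decide) h0
  have h2 := step 0 1 2 (by decide) h1
  have h3 := step 1 2 3 (by decide) h2
  have h4 := step 2 3 4 (by decide) h3
  have h5 := step 1 4 5 (by decide) h4
  have h6 := step 2 5 6 (by decide) h5
  have h7 := step 3 6 7 (by decide) h6
  have h8 := step 2 7 8 (by decide) h7
  have h9 := step 1 8 9 (by decide) h8
  have h10 := step 2 9 10 (by decide) h9
  intro x
  fin_cases x <;> assumption

set_option maxRecDepth 20000 in
theorem a1Gens_pow_four :
    (a1Gens 0 * a1Gens 1 * a1Gens 2) ^ 4 = Equiv.swap 5 3 * Equiv.swap 5 6 := by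
  decide

theorem a1Gens_closure :
    Subgroup.closure (Set.range a1Gens) = alternatingGroup (Fin 11) := by
  refine le_antisymm a1Gens_le_alternating ?_
  have := a1Gens_pretransitive
  have hprim : MulAction.IsPreprimitive (Subgroup.closure (Set.range a1Gens)) (Fin 11) :=
    MulAction.IsPreprimitive.of_prime_card (by rw [Nat.card_fin]; norm_num)
  refine Perm.alternatingGroup_le_of_isPreprimitive_of_isThreeCycle_mem hprim
    (g := Equiv.swap 5 3 * Equiv.swap 5 6)
    (Perm.isThreeCycle_swap_mul_swap_same (by decide) (by decide) (by decide)) ?_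
  rw [← a1Gens_pow_four]
  exact pow_mem (mul_mem (mul_mem (a1Gens_mem 0) (a1Gens_mem 1)) (a1Gens_mem 2)) 4

/-- In a group generated by two involutions, every element centralizes or inverts their product. -/
theorem conj_of_mem_closure_pair {G : Type*} [Group G] {a b g : G} (ha : a * a = 1)
    (hb : b * b = 1) (hg : g ∈ Subgroup.closure {a, b}) :
    g * (a * b) * g⁻¹ = a * b ∨ g * (a * b) * g⁻¹ = (a * b)⁻¹ := by
  have ha' : a⁻¹ = a := inv_eq_of_mul_eq_one_left ha
  have hb' : b⁻¹ = b := inv_eq_of_mul_eq_one_left hb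
  induction hg using Subgroup.closure_induction with
  | mem x hx =>
    right
    rcases hx with rfl | rfl
    · rw [mul_inv_rev, ha', hb', ← mul_assoc, ha, one_mul]
    · rw [mul_inv_rev, ha', hb', mul_assoc, mul_assoc, hb, mul_one]
  | one => left; simp
  | mul x y _ _ hx hy =>
    have e : x * y * (a * b) * (x * y)⁻¹ = x * (y * (a * b) * y⁻¹) * x⁻¹ := by group
    have f : x * (a * b)⁻¹ * x⁻¹ = (x * (a * b) * x⁻¹)⁻¹ := by group
    rw [e]
    rcases hy with hy | hy <;> rw [hy]
    · exact hx
    · rw [f]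
      rcases hx with hx | hx <;> rw [hx] <;> simp
  | inv x _ hx =>
    rcases hx with hx | hx
    · left
      nth_rw 1 [← hx]
      group
    · right
      have := congrArg (fun t => x⁻¹ * t⁻¹ * x) hx
      simp only [inv_inv] at this ⊢
      rw [← this]
      group

set_option maxRecDepth 20000 in
/-- `h` (here `(2 5)(4 6)`, the points being `0, …, 10`) as the conjugate of `ρ₀` by `ρ₀ρ₁ρ₂ρ₁`. -/
theorem double_swap_eq_left :
    (Equiv.swap 2 5 * Equiv.swap 4 6 : Perm (Fin 11)) =
      (a1Gens 0 * a1Gens 1 * a1Gens 2 * a1Gens 1) * a1Gens 0 *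
        (a1Gens 0 * a1Gens 1 * a1Gens 2 * a1Gens 1)⁻¹ := by
  decide

set_option maxRecDepth 20000 in
/-- `h` as a conjugate of `ρ₃` by an element of `⟨ρ₁, ρ₂, ρ₃⟩`. -/
theorem double_swap_eq_right :
    (Equiv.swap 2 5 * Equiv.swap 4 6 : Perm (Fin 11)) =
      (a1Gens 3 * a1Gens 2 * a1Gens 1 * a1Gens 3 * a1Gens 2 * a1Gens 1 * a1Gens 2 *
        a1Gens 1 * a1Gens 3 * a1Gens 2) * a1Gens 3 *
      (a1Gens 3 * a1Gens 2 * a1Gens 1 * a1Gens 3 * a1Gens 2 * a1Gens 1 * a1Gens 2 *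
        a1Gens 1 * a1Gens 3 * a1Gens 2)⁻¹ := by
  decide

theorem double_swap_notMem :
    (Equiv.swap 2 5 * Equiv.swap 4 6 : Perm (Fin 11)) ∉
      Subgroup.closure {a1Gens 1, a1Gens 2} := by
  intro h
  have := conj_of_mem_closure_pair (a1Gens_sggi.1 1).2 (a1Gens_sggi.1 2).2 h
  revert this
  decide

/-- The four permutations above form an sggi generating the
alternating group `A₁₁`, but not a string C-group: the intersection property
fails, namely `⟨ρ₁, ρ₂, ρ₃⟩ ∩ ⟨ρ₀, ρ₁, ρ₂⟩ ≠ ⟨ρ₁, ρ₂⟩`. -/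
theorem statement18 :
    Sggi a1Gens ∧
    Subgroup.closure (Set.range a1Gens) = alternatingGroup (Fin 11) ∧
    Subgroup.closure {a1Gens 1, a1Gens 2, a1Gens 3} ⊓
        Subgroup.closure {a1Gens 0, a1Gens 1, a1Gens 2} ≠
      Subgroup.closure {a1Gens 1, a1Gens 2} := by
  refine ⟨a1Gens_sggi, a1Gens_closure, fun h => double_swap_notMem ?_⟩
  rw [← h, Subgroup.mem_inf]
  constructor
  · have h1 : a1Gens 1 ∈ Subgroup.closure {a1Gens 1, a1Gens 2, a1Gens 3} :=
      Subgroup.subset_closure (by simp)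
    have h2 : a1Gens 2 ∈ Subgroup.closure {a1Gens 1, a1Gens 2, a1Gens 3} :=
      Subgroup.subset_closure (by simp)
    have h3 : a1Gens 3 ∈ Subgroup.closure {a1Gens 1, a1Gens 2, a1Gens 3} :=
      Subgroup.subset_closure (by simp)
    have hc := mul_mem (mul_mem (mul_mem (mul_mem (mul_mem (mul_mem (mul_mem (mul_mem
      (mul_mem h3 h2) h1) h3) h2) h1) h2) h1) h3) h2
    rw [double_swap_eq_right]
    exact mul_mem (mul_mem hc h3) (inv_mem hc)
  · have h0 : a1Gens 0 ∈ Subgroup.closure {a1Gens 0, a1Gens 1, a1Gens 2} :=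
      Subgroup.subset_closure (by simp)
    have h1 : a1Gens 1 ∈ Subgroup.closure {a1Gens 0, a1Gens 1, a1Gens 2} :=
      Subgroup.subset_closure (by simp)
    have h2 : a1Gens 2 ∈ Subgroup.closure {a1Gens 0, a1Gens 1, a1Gens 2} :=
      Subgroup.subset_closure (by simp)
    have hc := mul_mem (mul_mem (mul_mem h0 h1) h2) h1
    rw [double_swap_eq_left]
    exact mul_mem (mul_mem hc h0) (inv_mem hc)
end
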